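/- arXiv:1301.1735 — 3 statements merged into one kernel-verified Lean document; each statement's English description precedes it below -/
import Mathlib

section
/- For every u with 0 < u < 1, ∫_0^{√u} K(k) / (√(1−k²) √(u−k²)) dk = ∫_0^1 k K(k) / (√(1−k²) √(1−k²u)) dk = (1/(1+√u)) · [K(√(2√u/(1+√u)))]². -/
open Real MeasureTheory intervalIntegral Filter Topology

/-- Complete elliptic integral of the first kind. -/
noncomputable def ellipticK (k : ℝ) : ℝ :=
  ∫ θ in (0:ℝ)..(π/2), 1 / Real.sqrt (1 - k^2 * Real.sin θ ^ 2)


lemma half_sym (G : ℝ → ℝ) (hG : Continuous fun x => G (cos x ^ 2)) :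
    ∫ x in (0:ℝ)..π, G (cos x ^ 2) = 2 * ∫ x in (0:ℝ)..(π/2), G (cos x ^ 2) := by
  rw [← integral_add_adjacent_intervals (b := π/2) (hG.intervalIntegrable _ _)
    (hG.intervalIntegrable _ _)]
  have h : ∫ x in (π/2)..π, G (cos x ^ 2) = ∫ x in (0:ℝ)..(π/2), G (cos x ^ 2) := by
    have := intervalIntegral.integral_comp_sub_left (a := 0) (b := π/2)
      (fun x => G (cos x ^ 2)) π
    simp only [cos_pi_sub, neg_sq, sub_zero] at this
    rw [this]
    congr 1
    ring
  rw [h]; ring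

lemma full_sym (G : ℝ → ℝ) (hG : Continuous fun x => G (cos x ^ 2)) :
    ∫ x in (0:ℝ)..(2*π), G (cos x ^ 2) = 4 * ∫ x in (0:ℝ)..(π/2), G (cos x ^ 2) := by
  rw [← integral_add_adjacent_intervals (b := π) (hG.intervalIntegrable _ _)
    (hG.intervalIntegrable _ _)]
  have h : ∫ x in π..(2*π), G (cos x ^ 2) = ∫ x in (0:ℝ)..π, G (cos x ^ 2) := by
    have := intervalIntegral.integral_comp_add_right (a := 0) (b := π)
      (fun x => G (cos x ^ 2)) π
    simp only [cos_add_pi, neg_sq, zero_add] at this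
    rw [this]
    congr 1
    ring
  rw [h, half_sym G hG]; ring

lemma double_sym (G : ℝ → ℝ) (hG : Continuous fun x => G (cos x ^ 2)) :
    ∫ x in (0:ℝ)..(2*π), G (cos (x/2) ^ 2) = 4 * ∫ x in (0:ℝ)..(π/2), G (cos x ^ 2) := by
  have := intervalIntegral.integral_comp_div (a := 0) (b := 2*π)
      (fun x => G (cos x ^ 2)) (c := 2) two_ne_zero
  rw [this]
  have e : 2 * π / 2 = π := by ring
  rw [zero_div, e, half_sym G hG, smul_eq_mul]; ring

lemma rot (f : ℝ → ℝ) (A B C ρ : ℝ) (hρ : 0 ≤ ρ) (h : B^2 + C^2 = ρ^2) :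
    ∫ x in (0:ℝ)..(2*π), f (A + B * cos x + C * sin x) =
      ∫ x in (0:ℝ)..(2*π), f (A + ρ * cos x) := by
  obtain ⟨α, hB, hC⟩ : ∃ α, B = ρ * cos α ∧ C = ρ * sin α := by
    refine ⟨Complex.arg ⟨B, C⟩, ?_, ?_⟩
    · have : ‖(⟨B, C⟩ : ℂ)‖ = ρ := by
        rw [Complex.norm_def, Complex.normSq_mk, ← sq, ← sq, h, Real.sqrt_sq hρ]
      rw [← this, Complex.norm_mul_cos_arg]
    · have : ‖(⟨B, C⟩ : ℂ)‖ = ρ := by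
        rw [Complex.norm_def, Complex.normSq_mk, ← sq, ← sq, h, Real.sqrt_sq hρ]
      rw [← this, Complex.norm_mul_sin_arg]
  have e : ∀ x, A + B * cos x + C * sin x = A + ρ * cos (x - α) := by
    intro x; rw [cos_sub, hB, hC]; ring
  simp only [e]
  rw [intervalIntegral.integral_comp_sub_right (fun x => f (A + ρ * cos x)) α]
  have hp : Function.Periodic (fun x => f (A + ρ * cos x)) (2*π) := by
    intro x; simp
  have := hp.intervalIntegral_add_eq (0 - α) 0
  rw [zero_add] at this
  rw [← this]
  congr 1
  ring

lemma landen (a b : ℝ) (ha : 0 < a) (hb : 0 < b) :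
    2 * ∫ x in (0:ℝ)..π, 1 / √(a^2 * cos x ^ 2 + b^2 * sin x ^ 2) =
      ∫ x in (0:ℝ)..(2*π), 1 / √(((a+b)/2)^2 * cos x ^ 2 + a * b * sin x ^ 2) := by
  have hM : ∀ x, 0 < a * cos x ^ 2 + b * sin x ^ 2 := by
    intro x
    rcases eq_or_ne (cos x) 0 with h | h
    · have : sin x ^ 2 = 1 := by nlinarith [sin_sq_add_cos_sq x]
      rw [h, this]; simpa using hb
    · have := pow_pos (abs_pos.2 h) 2
      rw [sq_abs] at this
      positivity
  have hD : ∀ x, 0 < a^2 * cos x ^ 2 + b^2 * sin x ^ 2 := by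
    intro x
    rcases eq_or_ne (cos x) 0 with h | h
    · have : sin x ^ 2 = 1 := by nlinarith [sin_sq_add_cos_sq x]
      rw [h, this]; simp; positivity
    · have := pow_pos (abs_pos.2 h) 2
      rw [sq_abs] at this
      positivity
  have hE : ∀ x, 0 < ((a+b)/2)^2 * cos x ^ 2 + a * b * sin x ^ 2 := by
    intro x
    rcases eq_or_ne (cos x) 0 with h | h
    · have : sin x ^ 2 = 1 := by nlinarith [sin_sq_add_cos_sq x]
      rw [h, this]; simp; positivity
    · have := pow_pos (abs_pos.2 h) 2
      rw [sq_abs] at this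
      positivity
  let q : ℝ → ℝ := fun x => (a - b) * (sin x * cos x) / (a * cos x ^ 2 + b * sin x ^ 2)
  have hq1 : ∀ x, 1 + q x ^ 2 = (a^2 * cos x ^ 2 + b^2 * sin x ^ 2) /
      (a * cos x ^ 2 + b * sin x ^ 2)^2 := by
    intro x
    have := (hM x).ne'
    simp only [q]
    field_simp
    have h := sin_sq_add_cos_sq x
    have h2 : cos x ^ 2 = 1 - sin x ^ 2 := by linarith
    have e : (a-b)^2 * sin x ^ 2 * cos x ^ 2 = (a-b)^2 * sin x ^ 2 * cos x ^ 2 := rfl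
    simp only [h2]; ring
  let f : ℝ → ℝ := fun x => 2 * x - arctan (q x)
  let f' : ℝ → ℝ := fun x => (a+b) * (a * cos x ^ 2 + b * sin x ^ 2) /
    (a^2 * cos x ^ 2 + b^2 * sin x ^ 2)
  have hf : ∀ x, HasDerivAt f (f' x) x := by
    intro x
    have hs := hasDerivAt_sin x
    have hc := hasDerivAt_cos x
    have h1 := ((hs.mul hc).const_mul (a-b)).div
      (((hc.pow 2).const_mul a).add ((hs.pow 2).const_mul b)) (hM x).ne'
    have h2 := ((hasDerivAt_id x).const_mul 2).sub h1.arctan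
    refine h2.congr_deriv ?_
    have hqq := hq1 x
    simp only [q] at hqq
    simp only [Pi.mul_apply, Pi.add_apply, Pi.div_apply, Pi.pow_apply]
    rw [hqq]
    have m := (hM x).ne'
    have d := (hD x).ne'
    simp only [f']
    field_simp
    have h := sin_sq_add_cos_sq x
    have h2 : cos x ^ 2 = 1 - sin x ^ 2 := by linarith
    have h4 : cos x ^ 4 = (1 - sin x ^ 2)^2 := by rw [← h2]; ring
    push_cast
    ring_nf
    simp only [h2, h4]
    ring
  have hcf' : Continuous f' := by
    simp only [f']
    exact Continuous.div (by fun_prop) (by fun_prop) (fun x => (hD x).ne')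
  have hg : Continuous fun x => 1 / √(((a+b)/2)^2 * cos x ^ 2 + a * b * sin x ^ 2) :=
    Continuous.div (by fun_prop) (by fun_prop) (fun x => (sqrt_pos.2 (hE x)).ne')
  have key := intervalIntegral.integral_comp_mul_deriv (a := 0) (b := π)
    (fun x _ => hf x) hcf'.continuousOn hg
  have f0 : f 0 = 0 := by simp [f, q]
  have fpi : f π = 2 * π := by simp [f, q]
  rw [f0, fpi] at key
  rw [← key, ← intervalIntegral.integral_const_mul]
  apply intervalIntegral.integral_congr
  intro x _
  simp only [Function.comp]
  have m := hM x
  have d := hD x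
  have hcos : cos (f x) ^ 2 = (a * cos x ^ 2 - b * sin x ^ 2)^2 /
      (a^2 * cos x ^ 2 + b^2 * sin x ^ 2) := by
    have hcf : cos (f x) = (cos (2*x) + sin (2*x) * q x) / √(1 + q x ^ 2) := by
      simp only [f]
      rw [cos_sub, cos_arctan, sin_arctan]; ring
    have m' := m.ne'
    have d' := d.ne'
    have hnum : cos (2*x) + sin (2*x) * q x = (a * cos x ^ 2 - b * sin x ^ 2) /
        (a * cos x ^ 2 + b * sin x ^ 2) := by
      rw [eq_div_iff m', add_mul, mul_assoc]
      have : q x * (a * cos x ^ 2 + b * sin x ^ 2) = (a - b) * (sin x * cos x) := by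
        simp only [q]; field_simp
      rw [this, cos_two_mul', sin_two_mul]
      linear_combination (a * cos x ^ 2 - b * sin x ^ 2) * sin_sq_add_cos_sq x
    rw [hcf, div_pow, sq_sqrt (by positivity), hq1 x, hnum]
    field_simp
  have hin : ((a+b)/2)^2 * cos (f x) ^ 2 + a * b * sin (f x) ^ 2 =
      ((a+b)/2 * (a * cos x ^ 2 + b * sin x ^ 2))^2 /
      (a^2 * cos x ^ 2 + b^2 * sin x ^ 2) := by
    rw [sin_sq (f x), hcos]
    have d' := d.ne'
    field_simp
    have h := sin_sq_add_cos_sq x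
    have h2 : cos x ^ 2 = 1 - sin x ^ 2 := by linarith
    simp only [h2]
    ring
  rw [hin, sqrt_div (by positivity), sqrt_sq (by positivity)]
  simp only [f']
  have sd := sqrt_pos.2 d
  have hsq := sq_sqrt d.le
  set D := √(a^2 * cos x ^ 2 + b^2 * sin x ^ 2)
  rw [← hsq]
  field_simp

lemma agm (W ρ : ℝ) (c : ℝ) (hc : 0 < c) (hW : 0 < W) (hρ : 0 ≤ ρ) (h : W^2 - ρ^2 = c^2) :
    ∫ x in (0:ℝ)..(2*π), 1 / √(W + ρ * cos x) =
      4 * ∫ x in (0:ℝ)..(π/2), 1 / √((W + c)/2 * cos x ^ 2 + c * (1 - cos x ^ 2)) := by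
  have hlt : 0 < W - ρ := by nlinarith [sq_nonneg (W - ρ), sq_pos_of_pos hc]
  have ha : 0 < W + ρ := by linarith
  have h1 := landen (√(W+ρ)) (√(W-ρ)) (sqrt_pos.2 ha) (sqrt_pos.2 hlt)
  have hab : √(W+ρ) * √(W-ρ) = c := by
    rw [← sqrt_mul ha.le, show (W+ρ)*(W-ρ) = c^2 by linarith, sqrt_sq hc.le]
  have hab2 : ((√(W+ρ) + √(W-ρ))/2)^2 = (W + c)/2 := by
    have e1 := sq_sqrt ha.le
    have e2 := sq_sqrt hlt.le
    linear_combination e1/4 + e2/4 + hab/2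
  rw [hab, hab2, sq_sqrt ha.le, sq_sqrt hlt.le] at h1
  simp only [sin_sq] at h1
  have hpos : ∀ x, 0 < (W + c)/2 * cos x ^ 2 + c * (1 - cos x ^ 2) := by
    intro x
    have := cos_sq_le_one x
    rcases eq_or_ne (cos x) 0 with h | h
    · rw [h]; simpa using hc
    · have := pow_pos (abs_pos.2 h) 2
      rw [sq_abs] at this
      have : 0 ≤ 1 - cos x ^ 2 := by linarith
      positivity
  rw [full_sym (fun y => 1 / √((W + c)/2 * y + c * (1 - y)))
    (Continuous.div (by fun_prop) (by fun_prop) (fun x => (sqrt_pos.2 (hpos x)).ne'))] at h1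
  rw [← h1]
  have h2 := intervalIntegral.integral_comp_mul_left (a := 0) (b := π)
    (fun x => 1 / √(W + ρ * cos x)) (c := 2) two_ne_zero
  rw [mul_zero, smul_eq_mul] at h2
  have h3 : ∫ x in (0:ℝ)..(2*π), 1 / √(W + ρ * cos x) =
    2 * ∫ x in (0:ℝ)..π, 1 / √(W + ρ * cos (2*x)) := by rw [h2]; ring
  rw [h3]
  congr 1
  apply intervalIntegral.integral_congr
  intro x _
  simp only
  rw [cos_two_mul]
  congr 2
  ring

lemma amp_pos (A B C ρ x : ℝ) (hρ : 0 ≤ ρ) (h : B^2 + C^2 = ρ^2) (hA : ρ < A) :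
    0 < A + B * cos x + C * sin x := by
  have h1 : (B * cos x + C * sin x)^2 ≤ ρ^2 := by
    rw [← h]
    have := sin_sq_add_cos_sq x
    nlinarith [sq_nonneg (B * sin x - C * cos x)]
  have := abs_le_of_sq_le_sq' h1 hρ
  linarith [this.1]

noncomputable def Jint (u : ℝ) : ℝ :=
  ∫ φ in (0:ℝ)..(π/2), ∫ θ in (0:ℝ)..(π/2), 1 / √(1 - u + u * cos φ ^ 2 * cos θ ^ 2)

lemma clausen (s : ℝ) (hs : 0 < s) (hs1 : s < 1) :
    (∫ x in (0:ℝ)..(2*π), 1 / √(1 + s * cos x))^2 = 16 * Jint (s^2) := by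
  have hs2 : s^2 < 1 := by nlinarith
  let c := √(1 - s^2)
  have hc : 0 < c := sqrt_pos.2 (by linarith)
  have hc2 : c^2 = 1 - s^2 := sq_sqrt (by linarith)
  let E : ℝ → ℝ → ℝ := fun b w =>
    (1 - s * cos b) + s * (s - cos b) * cos w + (-(s * c * sin b)) * sin w
  have hA : ∀ b, 0 < 1 - s * cos b := by
    intro b; nlinarith [cos_le_one b, neg_one_le_cos b]
  have hamp : ∀ b, (s * (s - cos b))^2 + (-(s * c * sin b))^2 = (s * (1 - s * cos b))^2 := by
    intro b
    linear_combination s^2 * sin b ^ 2 * hc2 + s^2 * (1 - s^2) * sin_sq_add_cos_sq b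
  have hE : ∀ b w, 0 < E b w := by
    intro b w
    exact amp_pos _ _ _ _ w (by have := hA b; positivity) (hamp b) (by nlinarith [hA b])
  have hcont : Continuous (Function.uncurry fun b w => 1 / √(E b w)) := by
    apply Continuous.div (by fun_prop) (by simp only [E]; fun_prop)
    intro p; exact (sqrt_pos.2 (hE _ _)).ne'
  have h1 : ∀ b, ∫ w in (0:ℝ)..(2*π), 1 / √(E b w) =
      (∫ x in (0:ℝ)..(2*π), 1 / √(1 + s * cos x)) * (1 / √(1 - s * cos b)) := by
    intro b
    have := rot (fun y => 1 / √y) (1 - s * cos b) _ _ _ (by have := hA b; positivity) (hamp b)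
    simp only [E]
    rw [this, ← intervalIntegral.integral_mul_const]
    apply intervalIntegral.integral_congr
    intro x _
    simp only
    rw [show 1 - s * cos b + s * (1 - s * cos b) * cos x =
      (1 - s * cos b) * (1 + s * cos x) by ring, sqrt_mul (hA b).le, one_div_mul_one_div, mul_comm]
  have h2 : ∫ b in (0:ℝ)..(2*π), 1 / √(1 - s * cos b) =
      ∫ x in (0:ℝ)..(2*π), 1 / √(1 + s * cos x) := by
    have := rot (fun y => 1 / √y) 1 (-s) 0 s hs.le (by ring)
    rw [← this]
    apply intervalIntegral.integral_congr
    intro x _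
    simp only
    congr 2; ring
  have h3 : (∫ x in (0:ℝ)..(2*π), 1 / √(1 + s * cos x))^2 =
      ∫ b in (0:ℝ)..(2*π), ∫ w in (0:ℝ)..(2*π), 1 / √(E b w) := by
    simp only [h1]
    rw [intervalIntegral.integral_const_mul, h2, sq]
  have hsw : ∫ b in (0:ℝ)..(2*π), ∫ w in (0:ℝ)..(2*π), 1 / √(E b w) =
      ∫ w in (0:ℝ)..(2*π), ∫ b in (0:ℝ)..(2*π), 1 / √(E b w) := by
    apply intervalIntegral_intervalIntegral_swap
    exact (hcont.continuousOn.integrableOn_compact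
      (isCompact_uIcc.prod isCompact_uIcc)).mono_set
      (Set.prod_mono Set.uIoc_subset_uIcc Set.uIoc_subset_uIcc)
  have h4 : ∀ w, ∫ b in (0:ℝ)..(2*π), 1 / √(E b w) =
      4 * ∫ x in (0:ℝ)..(π/2), 1 / √(1 - s^2 + s^2 * cos (w/2) ^ 2 * cos x ^ 2) := by
    intro w
    let W := 1 + s^2 * cos w
    have hW : 1 - s^2 ≤ W := by simp only [W]; nlinarith [neg_one_le_cos w]
    have hWp : 0 < W := by linarith
    have hR : 0 ≤ W^2 - (1-s^2)^2 := by nlinarith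
    have e := rot (fun y => 1 / √y) W (-(s * (1 + cos w))) (-(s * c * sin w))
      (√(W^2 - (1-s^2)^2)) (sqrt_nonneg _) (by
        rw [sq_sqrt hR]
        simp only [W]
        linear_combination s^2 * sin w ^ 2 * hc2 + s^2 * (1 - s^2) * sin_sq_add_cos_sq w)
    have e2 := agm W (√(W^2 - (1-s^2)^2)) (1 - s^2) (by linarith) hWp (sqrt_nonneg _)
      (by rw [sq_sqrt hR]; ring)
    have e3 : ∫ b in (0:ℝ)..(2*π), 1 / √(E b w) = ∫ x in (0:ℝ)..(2*π),
        1 / √(W + -(s * (1 + cos w)) * cos x + -(s * c * sin w) * sin x) := by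
      apply intervalIntegral.integral_congr
      intro x _
      simp only [E, W]
      congr 2; ring
    rw [e3, e, e2]
    congr 1
    apply intervalIntegral.integral_congr
    intro x _
    simp only
    congr 2
    have : cos w = 2 * cos (w/2) ^ 2 - 1 := by rw [← cos_two_mul]; congr 1; ring
    simp only [W]
    rw [this]; ring
  rw [h3, hsw]
  simp only [h4]
  rw [intervalIntegral.integral_const_mul]
  have hco : Continuous fun p : ℝ × ℝ => 1 / √(1 - s^2 + s^2 * cos p.1 ^ 2 * cos p.2 ^ 2) := by
    apply Continuous.div (by fun_prop) (by fun_prop)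
    intro p
    have : 0 < 1 - s^2 := by linarith
    exact (sqrt_pos.2 (by positivity)).ne'
  rw [double_sym (fun y => ∫ x in (0:ℝ)..(π/2), 1 / √(1 - s^2 + s^2 * y * cos x ^ 2))
    (intervalIntegral.continuous_parametric_intervalIntegral_of_continuous' (by exact hco) _ _)]
  rw [Jint]; ring

lemma K_eq (s : ℝ) (hs : 0 < s) (hs1 : s < 1) :
    ellipticK (√(2*s/(1+s))) = √(1+s) / 4 * ∫ x in (0:ℝ)..(2*π), 1 / √(1 + s * cos x) := by
  have hp : ∀ x, 0 < 1 - s + 2 * s * cos x ^ 2 := fun x => by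
    have : 0 < 1 - s := by linarith
    positivity
  have h1 : ∫ x in (0:ℝ)..(2*π), 1 / √(1 + s * cos x) =
      4 * ∫ x in (0:ℝ)..(π/2), 1 / √(1 - s + 2 * s * cos x ^ 2) := by
    rw [← double_sym (fun y => 1 / √(1 - s + 2 * s * y))
      (Continuous.div (by fun_prop) (by fun_prop) (fun x => (sqrt_pos.2 (hp x)).ne'))]
    apply intervalIntegral.integral_congr
    intro x _
    simp only
    have : cos x = 2 * cos (x/2) ^ 2 - 1 := by rw [← cos_two_mul]; congr 1; ring
    rw [this]
    congr 2; ring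
  rw [h1, ellipticK, sq_sqrt (by positivity)]
  rw [show √(1+s)/4 * (4 * ∫ x in (0:ℝ)..(π/2), 1 / √(1 - s + 2 * s * cos x ^ 2)) =
    √(1+s) * ∫ x in (0:ℝ)..(π/2), 1 / √(1 - s + 2 * s * cos x ^ 2) by ring,
    ← intervalIntegral.integral_const_mul]
  apply intervalIntegral.integral_congr
  intro x _
  simp only
  rw [show 1 - 2*s/(1+s) * sin x ^ 2 = (1 - s + 2 * s * cos x ^ 2) / (1+s) by
    rw [sin_sq]; field_simp; ring]
  rw [sqrt_div (hp x).le]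
  field_simp

lemma rhs_eq (u : ℝ) (hu : 0 < u) (hu1 : u < 1) :
    (1/(1+√u)) * (ellipticK (√(2*√u / (1+√u))))^2 = Jint u := by
  have hs : 0 < √u := sqrt_pos.2 hu
  have hs1 : √u < 1 := by rw [sqrt_lt' one_pos]; linarith
  rw [K_eq _ hs hs1, mul_pow, clausen _ hs hs1, sq_sqrt hu.le, div_pow, sq_sqrt (by positivity)]
  field_simp
  norm_num

lemma subst_neg (g g' : ℝ → ℝ) (a b : ℝ) (hab : a < b) (hc : ContinuousOn g (Set.Icc a b))
    (hd : ∀ x ∈ Set.Ioo a b, HasDerivAt g (g' x) x) (hneg : ∀ x ∈ Set.Ioo a b, g' x < 0)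
    (f : ℝ → ℝ) : ∫ y in (g b)..(g a), f y = ∫ x in a..b, -g' x * f (g x) := by
  have hanti : StrictAntiOn g (Set.Icc a b) := by
    apply strictAntiOn_of_deriv_neg (convex_Icc a b) hc
    intro x hx
    rw [interior_Icc] at hx
    rw [(hd x hx).deriv]; exact hneg x hx
  have himg : Set.image g (Set.Ioo a b) = Set.Ioo (g b) (g a) := by
    apply Set.Subset.antisymm
    · rintro _ ⟨x, hx, rfl⟩
      exact ⟨hanti ⟨hx.1.le, hx.2.le⟩ ⟨hab.le, le_rfl⟩ hx.2,
        hanti ⟨le_rfl, hab.le⟩ ⟨hx.1.le, hx.2.le⟩ hx.1⟩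
    · exact intermediate_value_Ioo' hab.le hc
  have hlt : g b < g a := hanti ⟨le_rfl, hab.le⟩ ⟨hab.le, le_rfl⟩ hab
  rw [intervalIntegral.integral_of_le hlt.le, intervalIntegral.integral_of_le hab.le,
    integral_Ioc_eq_integral_Ioo, integral_Ioc_eq_integral_Ioo, ← himg,
    integral_image_eq_integral_abs_deriv_smul measurableSet_Ioo
      (fun x hx => (hd x hx).hasDerivWithinAt) (hanti.injOn.mono Set.Ioo_subset_Icc_self)]
  apply setIntegral_congr_fun measurableSet_Ioo
  intro x hx
  simp only [smul_eq_mul]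
  rw [abs_of_neg (hneg x hx)]

lemma lhs1_eq (u : ℝ) (hu : 0 < u) (hu1 : u < 1) :
    (∫ k in (0:ℝ)..(√u), ellipticK k / (√(1-k^2) * √(u-k^2))) = Jint u := by
  have hp : ∀ x, 0 < 1 - u * sin x ^ 2 := fun x => by nlinarith [sin_sq_le_one x]
  let g : ℝ → ℝ := fun x => √u * cos x / √(1 - u * sin x ^ 2)
  let g' : ℝ → ℝ := fun x => -(√u * (1-u) * sin x / √(1 - u * sin x ^ 2)^3)
  have hd : ∀ x, HasDerivAt g (g' x) x := by
    intro x
    have hs := hasDerivAt_sin x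
    have hc := hasDerivAt_cos x
    have h1 : HasDerivAt (fun x => 1 - u * sin x ^ 2) (-(u * (2 * sin x * cos x))) x := by
      have := ((hs.pow 2).const_mul u).const_sub 1
      refine this.congr_deriv ?_
      push_cast; ring
    have h2 := (hc.const_mul (√u)).div (h1.sqrt (hp x).ne') (sqrt_pos.2 (hp x)).ne'
    refine h2.congr_deriv ?_
    have sp := (sqrt_pos.2 (hp x))
    have sq := sq_sqrt (hp x).le
    simp only [g']
    set D := √(1 - u * sin x ^ 2)
    field_simp
    rw [sq, cos_sq']; ring
  have hsub := subst_neg g g' 0 (π/2) (by positivity)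
    (fun x _ => (hd x).continuousAt.continuousWithinAt) (fun x _ => hd x)
    (by
      intro x hx
      have : 0 < sin x := sin_pos_of_pos_of_lt_pi hx.1 (by linarith [hx.2, pi_pos])
      have h1 : 0 < 1 - u := by linarith
      have := sqrt_pos.2 (hp x)
      simp only [g', neg_lt_zero]
      positivity)
    (fun k => ellipticK k / (√(1-k^2) * √(u-k^2)))
  have g0 : g 0 = √u := by simp [g]
  have g1 : g (π/2) = 0 := by simp [g]
  rw [g0, g1] at hsub
  rw [hsub, Jint, intervalIntegral.integral_of_le (by positivity),
    intervalIntegral.integral_of_le (by positivity),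
    integral_Ioc_eq_integral_Ioo, integral_Ioc_eq_integral_Ioo]
  apply setIntegral_congr_fun measurableSet_Ioo
  intro x hx
  have sx : 0 < sin x := sin_pos_of_pos_of_lt_pi hx.1 (by linarith [hx.2, pi_pos])
  have h1u : 0 < 1 - u := by linarith
  have sp := sqrt_pos.2 (hp x)
  have sq := sq_sqrt (hp x).le
  have su := sqrt_pos.2 hu
  have hg2 : g x ^ 2 = u * cos x ^ 2 / (1 - u * sin x ^ 2) := by
    simp only [g]; rw [div_pow, mul_pow, sq_sqrt hu.le, sq]
  have hpx := (hp x).ne'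
  have e1 : 1 - g x ^ 2 = (1-u) / (1 - u * sin x ^ 2) := by
    rw [hg2, eq_div_iff hpx, sub_mul, div_mul_cancel₀ _ hpx, cos_sq']; ring
  have e2 : u - g x ^ 2 = u * (1-u) * sin x ^ 2 / (1 - u * sin x ^ 2) := by
    rw [hg2, eq_div_iff hpx, sub_mul, div_mul_cancel₀ _ hpx, cos_sq']; ring
  have e3 : √(1 - g x ^ 2) * √(u - g x ^ 2) = √u * (1-u) * sin x / √(1 - u * sin x ^ 2)^2 := by
    rw [← sqrt_mul (by rw [e1]; exact (div_pos h1u (hp x)).le), e1, e2, sq,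
      div_mul_div_comm, sqrt_div (by positivity), ← _root_.sq (1 - u * sin x ^ 2),
      sqrt_sq (hp x).le, show (1-u) * (u * (1-u) * sin x ^ 2) = u * ((1-u) * sin x)^2 by ring,
      sqrt_mul hu.le, sqrt_sq (by positivity)]
    ring
  simp only
  rw [e3]
  simp only [g', neg_neg]
  have : √u * (1 - u) * sin x / √(1 - u * sin x ^ 2) ^ 3 *
      (ellipticK (g x) / (√u * (1 - u) * sin x / √(1 - u * sin x ^ 2) ^ 2)) =
      1 / √(1 - u * sin x ^ 2) * ellipticK (g x) := by
    have := h1u.ne'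
    field_simp
  rw [this, ellipticK, ← intervalIntegral.integral_const_mul]
  apply intervalIntegral.integral_congr
  intro θ _
  simp only
  rw [one_div_mul_one_div, ← sqrt_mul (hp x).le, hg2]
  congr 2
  rw [mul_sub, ← mul_assoc, mul_div_cancel₀ _ hpx, sin_sq, sin_sq]; ring

lemma sin_lint (r : ℝ) (hr : 0 < r) (hr1 : r ≤ 1) (f : ℝ → ℝ) :
    ∫⁻ y in Set.Ioo 0 1, ENNReal.ofReal (f y * (1 / √(r^2 - y^2))) =
      ∫⁻ x in Set.Ioo 0 (π/2), ENNReal.ofReal (f (r * sin x)) := by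
  have h1 : ∫⁻ y in Set.Ioo 0 1, ENNReal.ofReal (f y * (1 / √(r^2 - y^2))) =
      ∫⁻ y in Set.Ioo 0 r, ENNReal.ofReal (f y * (1 / √(r^2 - y^2))) := by
    rw [← lintegral_indicator measurableSet_Ioo, ← lintegral_indicator measurableSet_Ioo]
    congr 1
    funext y
    by_cases hy : y ∈ Set.Ioo 0 r
    · rw [Set.indicator_of_mem hy, Set.indicator_of_mem (show y ∈ Set.Ioo (0:ℝ) 1 from ⟨hy.1, hy.2.trans_le hr1⟩)]
    · rw [Set.indicator_of_notMem hy]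
      by_cases hy1 : y ∈ Set.Ioo (0:ℝ) 1
      · rw [Set.indicator_of_mem hy1]
        have : r ≤ y := by
          by_contra hh
          exact hy ⟨hy1.1, not_le.1 hh⟩
        rw [sqrt_eq_zero_of_nonpos (by nlinarith)]
        simp
      · rw [Set.indicator_of_notMem hy1]
  have hmono : StrictMonoOn (fun x => r * sin x) (Set.Icc 0 (π/2)) := by
    intro x hx y hy hxy
    exact mul_lt_mul_of_pos_left (strictMonoOn_sin ⟨by linarith [hx.1, pi_pos], hx.2⟩
      ⟨by linarith [hy.1, pi_pos], hy.2⟩ hxy) hr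
  have hp : (0:ℝ) < π/2 := by positivity
  have himg : Set.image (fun x => r * sin x) (Set.Ioo 0 (π/2)) = Set.Ioo 0 r := by
    apply Set.Subset.antisymm
    · rintro _ ⟨x, hx, rfl⟩
      have a1 := hmono ⟨le_rfl, hp.le⟩ ⟨hx.1.le, hx.2.le⟩ hx.1
      have a2 := hmono ⟨hx.1.le, hx.2.le⟩ ⟨hp.le, le_rfl⟩ hx.2
      simp only [sin_zero, mul_zero, sin_pi_div_two, mul_one] at a1 a2
      exact ⟨a1, a2⟩
    · have := intermediate_value_Ioo hp.le
        (f := fun x => r * sin x) (by fun_prop)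
      simpa using this
  rw [h1, ← himg, lintegral_image_eq_lintegral_abs_deriv_mul measurableSet_Ioo
    (fun x _ => ((hasDerivAt_sin x).const_mul r).hasDerivWithinAt)
    (hmono.injOn.mono Set.Ioo_subset_Icc_self)]
  apply setLIntegral_congr_fun measurableSet_Ioo
  intro x hx
  have cx : 0 < cos x := cos_pos_of_mem_Ioo ⟨by linarith [hx.1, pi_pos], hx.2⟩
  simp only
  rw [← ENNReal.ofReal_mul (abs_nonneg _), abs_of_pos (by positivity)]
  congr 1
  rw [show r^2 - (r * sin x)^2 = (r * cos x)^2 by rw [mul_pow, mul_pow, sin_sq]; ring,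
    sqrt_sq (by positivity)]
  field_simp

lemma double_lint (F : ℝ → ℝ → ℝ) (S T : Set ℝ) (hS : MeasurableSet S)
    (hm : Measurable (Function.uncurry F))
    (h0 : ∀ x y, 0 ≤ F x y) (hi : ∀ x ∈ S, IntegrableOn (F x) T) :
    ∫ x in S, ∫ y in T, F x y =
      (∫⁻ x in S, ∫⁻ y in T, ENNReal.ofReal (F x y)).toReal := by
  rw [integral_eq_lintegral_of_nonneg_ae]
  · congr 1
    apply setLIntegral_congr_fun hS
    intro x hx
    exact ofReal_integral_eq_lintegral_ofReal (hi x hx) (ae_of_all _ (h0 x))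
  · exact ae_of_all _ (fun x => integral_nonneg (h0 x))
  · exact (hm.stronglyMeasurable.integral_prod_right).aestronglyMeasurable

lemma lhs2_eq (u : ℝ) (hu : 0 < u) (hu1 : u < 1) :
    (∫ k in (0:ℝ)..1, k * ellipticK k / (√(1-k^2) * √(1-k^2*u))) = Jint u := by
  have h1u : 0 < 1 - u := by linarith
  have hz : ∀ z ∈ Set.Ioo (0:ℝ) 1, 0 < 1 - z^2 := fun z hz => by nlinarith [hz.1, hz.2]
  have hsub := subst_neg (fun z => √(1 - z^2)) (fun z => -(z / √(1 - z^2))) 0 1 one_pos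
    (by fun_prop)
    (by
      intro z h
      have h1 : HasDerivAt (fun z : ℝ => 1 - z^2) (-(2 * z)) z := by
        have := (hasDerivAt_pow 2 z).const_sub 1
        refine this.congr_deriv ?_
        norm_num
      refine (h1.sqrt (hz z h).ne').congr_deriv ?_
      have := sqrt_pos.2 (hz z h)
      field_simp)
    (by
      intro z h
      have := sqrt_pos.2 (hz z h)
      have := h.1
      simp only [neg_lt_zero]
      positivity)
    (fun k => k * ellipticK k / (√(1-k^2) * √(1-k^2*u)))
  simp only [one_pow, sub_self, sqrt_zero, ne_eq, OfNat.ofNat_ne_zero, not_false_eq_true,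
    zero_pow, sub_zero, sqrt_one] at hsub
  let F : ℝ → ℝ → ℝ := fun z θ => 1 / √(1 - u + u * z^2) * (1 / √(1 - (1 - z^2) * sin θ ^ 2))
  have hA : ∫ k in (0:ℝ)..1, k * ellipticK k / (√(1-k^2) * √(1-k^2*u)) =
      ∫ z in Set.Ioo (0:ℝ) 1, ∫ θ in Set.Ioo 0 (π/2), F z θ := by
    rw [hsub, intervalIntegral.integral_of_le zero_le_one, integral_Ioc_eq_integral_Ioo]
    apply setIntegral_congr_fun measurableSet_Ioo
    intro z h
    have p := hz z h
    have sp := sqrt_pos.2 p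
    have z0 := h.1
    simp only [neg_neg]
    rw [sq_sqrt p.le, sub_sub_cancel, sqrt_sq z0.le,
      show 1 - (1 - z^2) * u = 1 - u + u * z^2 by ring]
    have hw : 0 < √(1 - u + u * z^2) := sqrt_pos.2 (by positivity)
    have : z / √(1 - z^2) * (√(1 - z^2) * ellipticK √(1 - z^2) / (z * √(1 - u + u * z^2))) =
        1 / √(1 - u + u * z^2) * ellipticK √(1 - z^2) := by
      field_simp
    rw [this, ellipticK, intervalIntegral.integral_of_le (by positivity),
      integral_Ioc_eq_integral_Ioo, sq_sqrt p.le, ← MeasureTheory.integral_const_mul]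
  let G : ℝ → ℝ → ℝ := fun φ θ => 1 / √(1 - u + u * (cos φ * sin θ)^2)
  have hG : Continuous (Function.uncurry G) := by
    apply Continuous.div (by fun_prop) (by fun_prop)
    intro p
    exact (sqrt_pos.2 (by positivity)).ne'
  have hB : Jint u = ∫ φ in Set.Ioo 0 (π/2), ∫ θ in Set.Ioo 0 (π/2), G φ θ := by
    rw [Jint, intervalIntegral.integral_of_le (by positivity), integral_Ioc_eq_integral_Ioo]
    congr 1
    funext φ
    have hrefl := intervalIntegral.integral_comp_sub_left (a := 0) (b := π/2)
      (fun θ => 1 / √(1 - u + u * cos φ ^ 2 * cos θ ^ 2)) (π/2)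
    rw [sub_zero, sub_self] at hrefl
    rw [← hrefl, intervalIntegral.integral_of_le (by positivity), integral_Ioc_eq_integral_Ioo]
    simp only [cos_pi_div_two_sub, G, mul_pow, mul_assoc]
  rw [hA, hB, double_lint F _ _ measurableSet_Ioo (by simp only [F]; fun_prop)
    (fun x y => by positivity), double_lint G _ _ measurableSet_Ioo hG.measurable
    (fun x y => by positivity)]
  · congr 1
    have s1 : ∀ z ∈ Set.Ioo (0:ℝ) 1, ∫⁻ θ in Set.Ioo 0 (π/2), ENNReal.ofReal (F z θ) =
        ∫⁻ y in Set.Ioo 0 1, ENNReal.ofReal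
          (1 / √(1 - u + u * z^2) * (1 / √(1 - y^2)) * (1 / √(1 - z^2 - y^2))) := by
      intro z h
      have p := hz z h
      have := sin_lint (√(1 - z^2)) (sqrt_pos.2 p)
        (by rw [sqrt_le_left zero_le_one]; nlinarith)
        (fun y => 1 / √(1 - u + u * z^2) * (1 / √(1 - y^2)))
      simp only [mul_pow, sq_sqrt p.le] at this
      rw [this]
    have s2 : ∀ y ∈ Set.Ioo (0:ℝ) 1, ∫⁻ z in Set.Ioo 0 1, ENNReal.ofReal
          (1 / √(1 - u + u * z^2) * (1 / √(1 - y^2)) * (1 / √(1 - z^2 - y^2))) =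
        ENNReal.ofReal (1 / √(1 - y^2)) * ∫⁻ θ in Set.Ioo 0 (π/2), ENNReal.ofReal
          (1 / √(1 - u + u * ((√(1 - y^2) * sin θ)^2))) := by
      intro y h
      have p := hz y h
      have := sin_lint (√(1 - y^2)) (sqrt_pos.2 p)
        (by rw [sqrt_le_left zero_le_one]; nlinarith)
        (fun z => 1 / √(1 - u + u * z^2))
      rw [← this, ← lintegral_const_mul' _ _ ENNReal.ofReal_ne_top]
      congr 1
      funext z
      rw [← ENNReal.ofReal_mul (by positivity), sq_sqrt p.le,
        show 1 - z^2 - y^2 = 1 - y^2 - z^2 by ring]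
      congr 1
      ring
    rw [setLIntegral_congr_fun measurableSet_Ioo s1, lintegral_lintegral_swap,
      setLIntegral_congr_fun measurableSet_Ioo s2]
    · have hfin : ∀ y : ℝ, ∫⁻ θ in Set.Ioo 0 (π/2), ENNReal.ofReal
          (1 / √(1 - u + u * ((√(1 - y^2) * sin θ)^2))) = ENNReal.ofReal
          (∫ θ in Set.Ioo 0 (π/2), 1 / √(1 - u + u * ((√(1 - y^2) * sin θ)^2))) := by
        intro y
        rw [ofReal_integral_eq_lintegral_ofReal _ (ae_of_all _ (fun x => by positivity))]
        have : Continuous fun θ => 1 / √(1 - u + u * ((√(1 - y^2) * sin θ)^2)) := by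
          apply Continuous.div (by fun_prop) (by fun_prop)
          intro p
          exact (sqrt_pos.2 (by positivity)).ne'
        exact (this.continuousOn.integrableOn_compact isCompact_Icc).mono_set
          Set.Ioo_subset_Icc_self
      have s3 := sin_lint 1 one_pos le_rfl (fun y =>
        ∫ θ in Set.Ioo 0 (π/2), 1 / √(1 - u + u * ((√(1 - y^2) * sin θ)^2)))
      simp only [one_pow, one_mul] at s3
      have s4 : ∫⁻ y in Set.Ioo (0:ℝ) 1, ENNReal.ofReal (1 / √(1 - y^2)) *
          ∫⁻ θ in Set.Ioo 0 (π/2), ENNReal.ofReal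
          (1 / √(1 - u + u * ((√(1 - y^2) * sin θ)^2))) =
          ∫⁻ y in Set.Ioo (0:ℝ) 1, ENNReal.ofReal ((∫ θ in Set.Ioo 0 (π/2),
            1 / √(1 - u + u * ((√(1 - y^2) * sin θ)^2))) * (1 / √(1 - y^2))) := by
        congr 1
        funext y
        rw [hfin, ← ENNReal.ofReal_mul (by positivity), mul_comm]
      rw [s4, s3]
      apply setLIntegral_congr_fun measurableSet_Ioo
      intro φ h
      have cx : 0 < cos φ := cos_pos_of_mem_Ioo ⟨by linarith [h.1, pi_pos], h.2⟩
      simp only [G]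
      rw [← hfin]
      simp only [← cos_sq', sqrt_sq cx.le]
    · apply Measurable.aemeasurable
      fun_prop
  · intro x _
    have : Continuous (G x) := by fun_prop
    exact (this.continuousOn.integrableOn_compact isCompact_Icc).mono_set
          Set.Ioo_subset_Icc_self
  · intro z h
    have p := hz z h
    have : Continuous (F z) := by
      apply Continuous.mul continuous_const
      apply Continuous.div (by fun_prop) (by fun_prop)
      intro θ
      have := sin_sq_le_one θ
      have := h.1
      exact (sqrt_pos.2 (by nlinarith [pow_pos h.1 2])).ne'
    exact (this.continuousOn.integrableOn_compact isCompact_Icc).mono_set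
          Set.Ioo_subset_Icc_self

theorem stmt_12 (u : ℝ) (hu : 0 < u) (hu1 : u < 1) :
    (∫ k in (0:ℝ)..(Real.sqrt u),
        ellipticK k / (Real.sqrt (1-k^2) * Real.sqrt (u-k^2)))
      = (∫ k in (0:ℝ)..1,
          k * ellipticK k / (Real.sqrt (1-k^2) * Real.sqrt (1-k^2*u))) ∧
    (∫ k in (0:ℝ)..1,
        k * ellipticK k / (Real.sqrt (1-k^2) * Real.sqrt (1-k^2*u)))
      = (1/(1+Real.sqrt u)) *
          (ellipticK (Real.sqrt (2*Real.sqrt u / (1+Real.sqrt u))))^2 := by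
  rw [lhs1_eq u hu hu1, lhs2_eq u hu hu1, rhs_eq u hu hu1]
  exact ⟨rfl, rfl⟩
end

section
/- For every t with 0 < t < 1, [K(√t)]² = (2/π) ∫_0^1 K(√μ) K(√(1−μ)) / (1 − μ t) dμ. -/
open Real MeasureTheory intervalIntegral Filter Topology

/-- Normalised central binomial coefficients. -/
noncomputable def wa (k : ℕ) : ℝ := ∏ i ∈ Finset.range k, (2 * (i : ℝ) + 1) / (2 * i + 2)

/-- Their squares. -/
noncomputable def wb (k : ℕ) : ℝ := wa k ^ 2

lemma wa_succ (k : ℕ) : wa (k + 1) = wa k * ((2 * (k : ℝ) + 1) / (2 * k + 2)) :=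
  Finset.prod_range_succ _ _

lemma wa_zero : wa 0 = 1 := by simp [wa]

lemma wa_pos (k : ℕ) : 0 < wa k := Finset.prod_pos fun i _ => by positivity

lemma wa_le_one (k : ℕ) : wa k ≤ 1 :=
  Finset.prod_le_one (fun i _ => by positivity) fun i _ => by
    rw [div_le_one (by positivity)]; linarith

lemma wb_zero : wb 0 = 1 := by simp [wb, wa_zero]

lemma wb_pos (k : ℕ) : 0 < wb k := by have := wa_pos k; unfold wb; positivity

lemma wb_le_one (k : ℕ) : wb k ≤ 1 := pow_le_one₀ (wa_pos k).le (wa_le_one k)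

lemma wb_succ (k : ℕ) : wb (k + 1) = wb k * ((2 * (k : ℝ) + 1) / (2 * k + 2)) ^ 2 := by
  unfold wb; rw [wa_succ]; ring

lemma wb_W (k : ℕ) : wb k * (2 * k + 1) * Wallis.W k = 1 := by
  induction k with
  | zero => simp [wb_zero, Wallis.W]
  | succ k ih =>
    rw [wb_succ, Wallis.W_succ]
    refine Eq.trans ?_ ih
    push_cast
    field_simp
    ring

lemma tendsto_k_wb : Tendsto (fun k : ℕ => (k : ℝ) * wb k) atTop (𝓝 (1 / π)) := by
  have h1 : Tendsto (fun k : ℕ => (2⁻¹ : ℝ) * (Wallis.W k)⁻¹ - 2⁻¹ * (1 / ((2 * (k:ℝ) + 1)) * (Wallis.W k)⁻¹))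
      atTop (𝓝 (2⁻¹ * (π / 2)⁻¹ - 2⁻¹ * (0 * (π / 2)⁻¹))) := by
    have hW := Wallis.tendsto_W_nhds_pi_div_two.inv₀ (by positivity)
    have h2 : Tendsto (fun k : ℕ => 1 / (2 * (k:ℝ) + 1)) atTop (𝓝 0) := by
      refine tendsto_const_nhds.div_atTop ?_
      exact tendsto_atTop_add_const_right _ _ (tendsto_natCast_atTop_atTop.const_mul_atTop (by norm_num))
    exact (hW.const_mul _).sub ((h2.mul hW).const_mul _)
  have e : (2⁻¹ * (π / 2)⁻¹ - 2⁻¹ * (0 * (π / 2)⁻¹)) = 1 / π := by field_simp; ring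
  rw [e] at h1
  refine h1.congr fun k => ?_
  have := wb_W k
  have hp := Wallis.W_pos k
  have : wb k = 1 / ((2 * k + 1) * Wallis.W k) := by
    rw [eq_div_iff (by positivity)]; linarith
  rw [this]; field_simp; ring

/-- Beta values. -/
noncomputable def cf (k j : ℕ) : ℝ := (k.factorial * j.factorial : ℝ) / (k + j + 1).factorial

lemma cf_pos (k j : ℕ) : 0 < cf k j := by unfold cf; positivity

lemma cf_zero (k : ℕ) : cf k 0 = 1 / (k + 1) := by
  unfold cf; rw [Nat.add_zero, Nat.factorial_succ]; push_cast; field_simp; simp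

lemma cf_right (k j : ℕ) : cf k (j + 1) = cf k j * ((j + 1) / (k + j + 2)) := by
  unfold cf
  rw [show k + (j + 1) + 1 = (k + j + 1) + 1 by ring, Nat.factorial_succ (k + j + 1), Nat.factorial_succ j]
  push_cast; field_simp; ring

lemma cf_left (k j : ℕ) : cf (k + 1) j = cf k j * ((k + 1) / (k + j + 2)) := by
  unfold cf
  rw [show k + 1 + j + 1 = (k + j + 1) + 1 by ring, Nat.factorial_succ (k + j + 1), Nat.factorial_succ k]
  push_cast; field_simp; ring

lemma integral_beta (k j : ℕ) : ∫ x in (0:ℝ)..1, x ^ j * (1 - x) ^ k = cf k j := by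
  induction j generalizing k with
  | zero =>
    have := intervalIntegral.integral_comp_sub_left (a := (0:ℝ)) (b := 1) (fun x => x ^ k) 1
    simp only [pow_zero, one_mul]
    rw [this, cf_zero]; simp
  | succ j ih =>
    have e : ∀ x : ℝ, x ^ (j + 1) * (1 - x) ^ k = x ^ j * (1 - x) ^ k - x ^ j * (1 - x) ^ (k + 1) := by
      intro x; ring
    simp_rw [e]
    rw [intervalIntegral.integral_sub, ih, ih, cf_left, cf_right]
    · have : (k:ℝ) + j + 2 ≠ 0 := by positivity
      field_simp; ring
    · exact Continuous.intervalIntegrable (by fun_prop) _ _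
    · exact Continuous.intervalIntegrable (by fun_prop) _ _

lemma hasSum_cg {f g : ℕ → ℝ} {s : ℝ} (h : ∀ k, f k = g k) (hf : HasSum f s) : HasSum g s := by
  rwa [funext h] at hf

lemma hasSum_of_tele {f g : ℕ → ℝ} {l : ℝ} (h : ∀ k, f k = g (k + 1) - g k) (h0 : g 0 = 0)
    (hf : Summable f) (hl : Tendsto g atTop (𝓝 l)) : HasSum f l := by
  rw [hf.hasSum_iff_tendsto_nat]
  refine hl.congr fun n => ?_
  simp_rw [h]
  rw [Finset.sum_range_sub, h0, sub_zero]

lemma summable_of_tele {f g : ℕ → ℝ} {l : ℝ} (h : ∀ k, f k = g (k + 1) - g k) (h0 : g 0 = 0)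
    (hf : ∀ k, 0 ≤ f k) (hl : Tendsto g atTop (𝓝 l)) : HasSum f l := by
  rw [hasSum_iff_tendsto_nat_of_nonneg hf]
  refine hl.congr fun n => ?_
  simp_rw [h]
  rw [Finset.sum_range_sub, h0, sub_zero]

lemma hasSum_bc0 : HasSum (fun k => wb k * cf k 0) (4 / π) := by
  have := tendsto_k_wb.const_mul 4
  rw [show 4 * (1 / π) = 4 / π by ring] at this
  refine summable_of_tele (fun k => ?_) (by simp) (fun k => (mul_pos (wb_pos k) (cf_pos k 0)).le) this
  rw [cf_zero, wb_succ]; push_cast; field_simp; ring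

lemma cf_le (k j : ℕ) : cf k j ≤ cf k 0 := by
  induction j with
  | zero => rfl
  | succ j ih =>
    refine le_trans ?_ ih
    rw [cf_right]
    refine mul_le_of_le_one_right (cf_pos _ _).le ?_
    rw [div_le_one (by positivity)]; linarith [(k.cast_nonneg : (0:ℝ) ≤ k)]

lemma summable_bc (j : ℕ) : Summable (fun k => wb k * cf k j) :=
  Summable.of_nonneg_of_le (fun k => (mul_pos (wb_pos k) (cf_pos k j)).le)
    (fun k => mul_le_mul_of_nonneg_left (cf_le k j) (wb_pos k).le) hasSum_bc0.summable

/-- the normalised moments of `K'` -/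
noncomputable def mm (j : ℕ) : ℝ := ∑' k, wb k * cf k j

lemma mm_succ (j : ℕ) : (2 * (j:ℝ) + 3) ^ 2 * mm (j + 1) = (2 * j + 2) ^ 2 * mm j := by
  have hs := ((summable_bc (j + 1)).hasSum.mul_left ((2 * (j:ℝ) + 3) ^ 2)).sub
    ((summable_bc j).hasSum.mul_left ((2 * (j:ℝ) + 2) ^ 2))
  have ht : HasSum (fun k => (2 * (j:ℝ) + 3) ^ 2 * (wb k * cf k (j + 1)) - (2 * (j:ℝ) + 2) ^ 2 * (wb k * cf k j)) 0 := by
    refine hasSum_of_tele (g := fun k => 4 * (k * wb k * ((k + (j + 1) + 1) * cf k (j + 1)))) ?_ (by simp) hs.summable ?_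
    · intro k
      rw [cf_left k (j + 1), cf_right k j, wb_succ]
      push_cast
      have : (k:ℝ) + (j + 1) + 2 ≠ 0 := by positivity
      field_simp
      ring
    · have h1 : Tendsto (fun k : ℕ => ((k:ℝ) + (j + 1) + 1) * cf k (j + 1)) atTop (𝓝 0) := by
        have e : ∀ k : ℕ, ((k:ℝ) + (j + 1) + 1) * cf k (j + 1) = (j + 1) * cf k j := by
          intro k; rw [cf_right]; have : (k:ℝ) + j + 2 ≠ 0 := by positivity
          field_simp; ring
        simp_rw [e]
        have h0 : Tendsto (fun k : ℕ => cf k j) atTop (𝓝 0) := by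
          refine squeeze_zero (fun k => (cf_pos k j).le) (fun k => cf_le k j) ?_
          simp_rw [cf_zero]; exact tendsto_one_div_add_atTop_nhds_zero_nat
        simpa using h0.const_mul ((j:ℝ) + 1)
      simpa using (tendsto_k_wb.mul h1).const_mul 4
  have := hs.unique ht
  unfold mm; linarith

lemma mm_eq (j : ℕ) : mm j = 4 / π / ((2 * j + 1) ^ 2 * wb j) := by
  induction j with
  | zero => simp [wb_zero, mm, hasSum_bc0.tsum_eq]
  | succ j ih =>
    have h := mm_succ j
    rw [ih] at h
    have : mm (j + 1) = (2 * j + 2) ^ 2 * (4 / π / ((2 * j + 1) ^ 2 * wb j)) / (2 * (j:ℝ) + 3) ^ 2 := by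
      rw [eq_div_iff (by positivity)]; linarith
    rw [this, wb_succ]
    have := wb_pos j
    push_cast; field_simp; ring

/-- Summand for the moments of `K K'`. -/
noncomputable def TT (n k : ℕ) : ℝ := wb k / ((2 * (n + k : ℕ) + 1) ^ 2 * wb (n + k))

lemma TT_pos (n k : ℕ) : 0 < TT n k := by
  have := wb_pos k; have := wb_pos (n + k); unfold TT; positivity

lemma TT_zero (k : ℕ) : TT 0 k = 1 / (2 * k + 1) ^ 2 := by
  have := wb_pos k; unfold TT; rw [Nat.zero_add]; field_simp

lemma TT_succ (n k : ℕ) : TT (n + 1) k = TT n k * ((2 * n + 2 * k + 2) / (2 * n + 2 * k + 3)) ^ 2 := by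
  have := wb_pos k; have := wb_pos (n + k); unfold TT
  rw [show n + 1 + k = n + k + 1 by ring, wb_succ]; push_cast; field_simp; ring

lemma TT_right (n k : ℕ) : TT n (k + 1) = TT n k * ((2 * k + 1) / (2 * k + 2)) ^ 2 *
    ((2 * n + 2 * k + 2) / (2 * n + 2 * k + 3)) ^ 2 := by
  have := wb_pos k; have := wb_pos (n + k); unfold TT
  rw [show n + (k + 1) = n + k + 1 by ring, wb_succ, wb_succ]; push_cast; field_simp; ring

lemma TT_le (n k : ℕ) : TT n k ≤ 1 / (2 * k + 1) ^ 2 := by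
  induction n with
  | zero => rw [TT_zero]
  | succ n ih =>
    refine le_trans ?_ ih
    rw [TT_succ]
    refine mul_le_of_le_one_right (TT_pos _ _).le (pow_le_one₀ (by positivity) ?_)
    rw [div_le_one (by positivity)]; linarith

lemma hasSum_odd_aux {f : ℕ → ℝ} {s : ℝ} (h : HasSum f s) (he : ∀ k, f (2 * k) = 4⁻¹ * f k) :
    HasSum (fun k => f (2 * k + 1)) (s - 4⁻¹ * s) := by
  have h1 : HasSum (fun k => f (2 * k)) (4⁻¹ * s) := by
    simp_rw [he]; exact h.mul_left _
  have ho : Summable (fun k => f (2 * k + 1)) :=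
    h.summable.comp_injective (i := fun k : ℕ => 2 * k + 1) (fun a b hab => by
      have : 2 * a + 1 = 2 * b + 1 := hab
      omega)
  have h2 := (HasSum.even_add_odd h1 ho.hasSum).unique h
  rw [show s - 4⁻¹ * s = ∑' b, f (2 * b + 1) by linarith]; exact ho.hasSum

lemma hasSum_odd : HasSum (fun k : ℕ => 1 / (2 * (k:ℝ) + 1) ^ 2) (π ^ 2 / 8) := by
  have h := hasSum_odd_aux hasSum_zeta_two (fun k => by
    push_cast; rw [mul_pow, one_div, mul_inv, one_div]; norm_num)
  rw [show π ^ 2 / 6 - 4⁻¹ * (π ^ 2 / 6) = π ^ 2 / 8 by ring] at h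
  refine hasSum_cg (fun k => ?_) h
  push_cast; rfl

lemma summable_TT (n : ℕ) : Summable (TT n) :=
  Summable.of_nonneg_of_le (fun k => (TT_pos n k).le) (TT_le n) hasSum_odd.summable

noncomputable def vv (n : ℕ) : ℝ := ∑' k, TT n k

lemma vv_zero : vv 0 = π ^ 2 / 8 := by
  unfold vv; simp_rw [TT_zero]; exact hasSum_odd.tsum_eq

lemma tendsto_k_TT (n : ℕ) : Tendsto (fun k : ℕ => k * TT n k) atTop (𝓝 0) := by
  refine squeeze_zero (g := fun k : ℕ => 1 / ((k:ℝ) + 1)) (fun k => ?_) (fun k => ?_)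
    tendsto_one_div_add_atTop_nhds_zero_nat
  · have := TT_pos n k; positivity
  · refine le_trans (mul_le_mul_of_nonneg_left (TT_le n k) (by positivity)) ?_
    rw [mul_one_div, div_le_div_iff₀ (by positivity) (by positivity)]
    nlinarith [(k.cast_nonneg : (0:ℝ) ≤ k)]

lemma vv_one : vv 1 = vv 0 / 2 := by
  have hs := (summable_TT 1).hasSum.sub ((summable_TT 0).hasSum.div_const 2)
  have ht : HasSum (fun k => TT 1 k - TT 0 k / 2) 0 := by
    refine hasSum_of_tele (g := fun k => -(1/2) * (k * TT 0 k)) ?_ (by simp) hs.summable ?_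
    · intro k
      rw [TT_succ, TT_zero, TT_zero]; push_cast; field_simp; ring
    · have h := (tendsto_k_TT 0).const_mul (-(1/2)); rwa [mul_zero] at h
  have := hs.unique ht
  unfold vv; linarith

lemma vv_rec (n : ℕ) : ((n:ℝ) + 2) ^ 3 * vv (n + 2)
    = (2 * n + 3) * ((n + 1) ^ 2 + (n + 1) + 1 / 2) * vv (n + 1) - (n + 1) ^ 3 * vv n := by
  have hs := ((summable_TT (n + 2)).hasSum.mul_left (((n:ℝ) + 2) ^ 3)).sub
    (((summable_TT (n + 1)).hasSum.mul_left ((2 * (n:ℝ) + 3) * ((n + 1) ^ 2 + (n + 1) + 1 / 2))).sub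
    ((summable_TT n).hasSum.mul_left (((n:ℝ) + 1) ^ 3)))
  have ht := hasSum_of_tele (l := 0)
    (g := fun k : ℕ => - ((k:ℝ) ^ 2 * ((4 * n + 6) * k + (n + 1) * (4 * n + 7)) / (2 * n + 2 * k + 3) ^ 2 * TT n k))
    (fun k => ?_) (by simp) hs.summable ?_
  · have := hs.unique ht
    unfold vv; linarith
  · rw [TT_succ (n + 1), TT_succ n, TT_right]
    push_cast; field_simp; ring
  · rw [← neg_zero]
    refine Tendsto.neg ?_
    refine squeeze_zero (g := fun k : ℕ => ((4 * n + 6) + (n + 1) * (4 * n + 7)) * (k * TT n k)) (fun k => ?_) (fun k => ?_) ?_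
    · have := TT_pos n k; positivity
    · rw [← mul_assoc]
      refine mul_le_mul_of_nonneg_right ?_ (TT_pos n k).le
      rw [div_le_iff₀ (by positivity)]
      rcases Nat.eq_zero_or_pos k with rfl | hk
      · simp
      · have hk : (1:ℝ) ≤ k := by exact_mod_cast hk
        have h1 : (k:ℝ) * ((4 * n + 6) * k + (n + 1) * (4 * n + 7)) ≤ ((4 * n + 6) + (n + 1) * (4 * n + 7)) * (2 * n + 2 * k + 3) ^ 2 := by
          have h2 : ((4 * n + 6) * k + (n + 1) * (4 * n + 7)) ≤ ((4 * n + 6) + (n + 1) * (4 * n + 7)) * (k:ℝ) := by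
            have : (0:ℝ) ≤ (n + 1) * (4 * n + 7) := by positivity
            nlinarith
          have h3 : (k:ℝ) * k ≤ (2 * n + 2 * k + 3) ^ 2 := by
            rw [sq]; gcongr <;> linarith [(n.cast_nonneg : (0:ℝ) ≤ n)]
          calc _ ≤ (k:ℝ) * (((4 * n + 6) + (n + 1) * (4 * n + 7)) * (k:ℝ)) := by gcongr
            _ = ((4 * n + 6) + (n + 1) * (4 * n + 7)) * (k * k) := by ring
            _ ≤ _ := by gcongr
        calc _ = (k:ℝ) * ((k:ℝ) * ((4 * n + 6) * k + (n + 1) * (4 * n + 7))) := by ring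
          _ ≤ k * _ := mul_le_mul_of_nonneg_left h1 (by positivity)
          _ = _ := by ring
    · simpa using (tendsto_k_TT n).const_mul (((4 * n + 6) + (n + 1) * (4 * n + 7)) : ℝ)

/-- Extension of `wb` by zero to the integers. -/
noncomputable def wz (z : ℤ) : ℝ := if 0 ≤ z then wb z.toNat else 0

lemma wz_nat (k : ℕ) : wz k = wb k := by simp [wz]

lemma wz_neg {z : ℤ} (h : z < 0) : wz z = 0 := by simp [wz, h]

lemma wz_pred (z : ℤ) : wz (z - 1) = wz z * (2 * z / (2 * z - 1)) ^ 2 := by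
  rcases lt_trichotomy z 0 with h | rfl | h
  · rw [wz_neg h, wz_neg (by omega)]; simp
  · rw [wz_neg (by omega)]; simp
  · obtain ⟨k, rfl⟩ : ∃ k : ℕ, z = k + 1 := ⟨(z - 1).toNat, by omega⟩
    rw [add_sub_cancel_right, wz_nat, show (k:ℤ) + 1 = (k + 1 : ℕ) by push_cast; rfl, wz_nat, wb_succ]
    push_cast
    have : (2 * ((k:ℝ) + 1) - 1) ≠ 0 := by ring_nf; positivity
    rw [show (2 * ((k:ℝ) + 1) - 1) = 2 * k + 1 by ring]
    field_simp

/-- Cauchy square coefficients. -/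
noncomputable def uu (n : ℕ) : ℝ := ∑ k ∈ Finset.range (n + 1), wb k * wb (n - k)

lemma uu_eq (n m : ℕ) (h : n + 1 ≤ m) : uu n = ∑ k ∈ Finset.range m, wz k * wz ((n:ℤ) - k) := by
  unfold uu
  rw [← Finset.sum_subset (Finset.range_subset_range.2 h)]
  · refine Finset.sum_congr rfl fun k hk => ?_
    rw [Finset.mem_range] at hk
    rw [wz_nat, ← Nat.cast_sub (by omega), wz_nat]
  · intro k _ hk
    rw [Finset.mem_range] at hk
    rw [wz_neg (z := (n:ℤ) - k) (by omega), mul_zero]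

lemma odd_ne (z : ℤ) : (2 * (z:ℝ) - 1) ≠ 0 := by
  intro h
  have : (2 * z - 1 : ℤ) = 0 := by exact_mod_cast h
  omega

lemma uu_rec (n : ℕ) : ((n:ℝ) + 2) ^ 3 * uu (n + 2)
    = (2 * n + 3) * ((n + 1) ^ 2 + (n + 1) + 1 / 2) * uu (n + 1) - (n + 1) ^ 3 * uu n := by
  rw [uu_eq (n + 2) (n + 3) le_rfl, uu_eq (n + 1) (n + 3) (by omega), uu_eq n (n + 3) (by omega)]
  rw [← sub_eq_zero, Finset.mul_sum, Finset.mul_sum, Finset.mul_sum, ← Finset.sum_sub_distrib, ← Finset.sum_sub_distrib]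
  have key : ∀ k ∈ Finset.range (n + 3), ∀ G : ℕ → ℝ,
     (G = fun k : ℕ => (k:ℝ) ^ 2 * ((n + 2) * (4 * n + 5) - (4 * n + 6) * k) * wz k * wz ((n:ℤ) + 2 - k)
        / (2 * (n + 2 - k) - 1) ^ 2) →
     ((n:ℝ) + 2) ^ 3 * (wz k * wz (((n + 2 : ℕ):ℤ) - k))
      - ((2 * n + 3) * ((n + 1) ^ 2 + (n + 1) + 1 / 2) * (wz k * wz (((n + 1 : ℕ) : ℤ) - k))
      - (n + 1) ^ 3 * (wz k * wz ((n : ℤ) - k))) = G (k + 1) - G k := by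
    rintro k - G rfl
    have e2 : (((n + 2 : ℕ):ℤ) - k) = (n:ℤ) + 2 - k := by push_cast; ring
    have e1 : (((n + 1 : ℕ):ℤ) - k) = (n:ℤ) + 2 - k - 1 := by push_cast; ring
    have e0 : ((n:ℤ) - k) = (n:ℤ) + 2 - k - 1 - 1 := by push_cast; ring
    have e3 : ((n:ℤ) + 2 - (k + 1 : ℕ)) = (n:ℤ) + 2 - k - 1 := by push_cast; ring
    have o1 := odd_ne ((n:ℤ) + 2 - k)
    have o2 := odd_ne ((n:ℤ) + 2 - k - 1)
    simp only [e3]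
    rw [e2, e1, e0, wz_pred ((n:ℤ) + 2 - k - 1), wz_pred ((n:ℤ) + 2 - k), wz_nat, wz_nat, wb_succ]
    push_cast at *
    rw [show (2 * ((n:ℝ) + 2 - (k + 1)) - 1) = 2 * (n + 2 - k - 1) - 1 by ring]
    generalize wz ((n:ℤ) + 2 - k) = B
    generalize wb k = A
    obtain ⟨j, hj⟩ : ∃ j : ℝ, j = n + 2 - k := ⟨_, rfl⟩
    have hk : (k:ℝ) = n + 2 - j := by linarith
    have hk2 : (2 * (k:ℝ) + 2) ≠ 0 := by positivity
    rw [← hj] at o1 o2 ⊢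
    have hk1 : (k:ℝ) + 1 ≠ 0 := by positivity
    have : ((k:ℝ) + 1) ^ 2 * ((n + 2) * (4 * n + 5) - (4 * n + 6) * (k + 1)) * (A * ((2 * k + 1) / (2 * k + 2)) ^ 2)
      = (2 * k + 1) ^ 2 / 4 * A * ((n + 2) * (4 * n + 5) - (4 * n + 6) * (k + 1)) := by
      field_simp; ring
    rw [this, hk]
    field_simp
    ring
  obtain ⟨G, hG⟩ : ∃ G : ℕ → ℝ, G = fun k : ℕ => (k:ℝ) ^ 2 * ((n + 2) * (4 * n + 5) - (4 * n + 6) * k) * wz k * wz ((n:ℤ) + 2 - k)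
        / (2 * (n + 2 - k) - 1) ^ 2 := ⟨_, rfl⟩
  rw [Finset.sum_congr rfl (fun k hk => key k hk G hG), Finset.sum_range_sub, hG]
  beta_reduce
  rw [wz_neg (z := (n:ℤ) + 2 - (n + 3 : ℕ)) (by push_cast; omega)]
  simp

lemma vv_eq (n : ℕ) : vv n = π ^ 2 / 8 * uu n := by
  induction n using Nat.strong_induction_on with
  | _ n ih =>
    match n, ih with
    | 0, _ => rw [vv_zero]; simp [uu, wb_zero]
    | 1, _ => rw [vv_one, vv_zero]; simp [uu, Finset.sum_range_succ, wb_zero, wb_succ]; ring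
    | n + 2, ih =>
      have h1 := vv_rec n
      rw [ih n (by omega), ih (n + 1) (by omega)] at h1
      have h2 := uu_rec n
      have h3 : ((n:ℝ) + 2) ^ 3 ≠ 0 := by positivity
      apply mul_left_cancel₀ h3
      rw [h1]; linear_combination (-(π ^ 2 / 8)) * h2

lemma hasSum_inv_sqrt {y : ℝ} (hy : |y| < 1) : HasSum (fun k => wa k * y ^ k) (1 / √(1 - y)) := by
  have h := (Real.one_div_one_sub_rpow_hasFPowerSeriesOnBall_zero (1 / 2)).hasSum (y := y)
    (by simpa [enorm_eq_nnnorm, ← NNReal.coe_lt_one] using hy)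
  simp only [zero_add, ← Real.sqrt_eq_rpow] at h
  refine hasSum_cg (fun k => ?_) h
  rw [FormalMultilinearSeries.ofScalars_apply_eq, smul_eq_mul]
  congr 1
  have h1 : Ring.choose ((1:ℝ) / 2 + k - 1) k = Ring.multichoose ((1:ℝ) / 2) k := by
    rw [Ring.choose]; congr 1; ring
  rw [h1]
  have h2 := Ring.factorial_nsmul_multichoose_eq_ascPochhammer ((1:ℝ) / 2) k
  have h3 : (ascPochhammer ℕ k).smeval ((1:ℝ) / 2) = k.factorial * wa k := by
    clear h h1 h2
    induction k with
    | zero => simp [wa_zero]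
    | succ k ih =>
      rw [ascPochhammer_succ_right, Polynomial.smeval_mul, ih, wa_succ, Nat.factorial_succ,
        Polynomial.smeval_add, Polynomial.smeval_X, Polynomial.smeval_natCast]
      push_cast; simp; field_simp; ring
  rw [h3, nsmul_eq_mul] at h2
  exact mul_left_cancel₀ (by positivity) h2

lemma integral_sin_half (k : ℕ) : ∫ θ in (0:ℝ)..(π/2), Real.sin θ ^ (2 * k) = π / 2 * wa k := by
  have h1 := intervalIntegral.integral_comp_sub_left (a := (0:ℝ)) (b := π / 2) (fun x => Real.cos x ^ (2 * k)) (π / 2)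
  simp only [Real.cos_pi_div_two_sub, sub_self, sub_zero] at h1
  rw [h1, EulerSine.integral_cos_pow_eq, integral_sin_pow_even, wa]; ring

lemma ellK_hasSum {x : ℝ} (h0 : 0 ≤ x) (h1 : x < 1) :
    HasSum (fun k => π / 2 * (wb k * x ^ k)) (ellipticK (√x)) := by
  have hb : ∀ θ : ℝ, |x * Real.sin θ ^ 2| ≤ x := fun θ => by
    rw [abs_of_nonneg (by positivity)]
    exact mul_le_of_le_one_right h0 (Real.sin_sq_le_one θ)
  have h := intervalIntegral.hasSum_integral_of_dominated_convergence (μ := volume) (a := 0) (b := π / 2)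
    (F := fun (k : ℕ) (θ : ℝ) => wa k * (x * Real.sin θ ^ 2) ^ k)
    (f := fun θ => 1 / √(1 - (√x) ^ 2 * Real.sin θ ^ 2))
    (fun k _ => x ^ k) (fun k => by
      refine Continuous.aestronglyMeasurable ?_; fun_prop)
    (fun k => Eventually.of_forall fun θ _ => by
      rw [norm_mul, norm_pow, Real.norm_eq_abs, Real.norm_eq_abs, abs_of_pos (wa_pos k)]
      calc _ ≤ 1 * x ^ k := mul_le_mul (wa_le_one k) (pow_le_pow_left₀ (abs_nonneg _) (hb θ) k) (by positivity) zero_le_one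
        _ = x ^ k := one_mul _)
    (Eventually.of_forall fun θ _ => summable_geometric_of_lt_one h0 h1)
    intervalIntegrable_const
    (Eventually.of_forall fun θ _ => by
      rw [Real.sq_sqrt h0]
      exact hasSum_inv_sqrt ((hb θ).trans_lt h1))
  refine hasSum_cg (fun k => ?_) h
  simp_rw [mul_pow, ← pow_mul]
  rw [intervalIntegral.integral_const_mul, intervalIntegral.integral_const_mul, integral_sin_half, wb]
  ring

lemma swap_sum {α : Type*} [MeasurableSpace α] {μ : Measure α} {f : ℕ → α → ℝ} {F : α → ℝ}
    (hf : ∀ k, Integrable (f k) μ) (h0 : ∀ᵐ a ∂μ, ∀ k, 0 ≤ f k a)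
    (hF : ∀ᵐ a ∂μ, HasSum (fun k => f k a) (F a)) (hs : Summable fun k => ∫ a, f k a ∂μ) :
    Integrable F μ ∧ HasSum (fun k => ∫ a, f k a ∂μ) (∫ a, F a ∂μ) := by
  have h0' : ∀ k, 0 ≤ᵐ[μ] f k := fun k => by filter_upwards [h0] with a ha using ha k
  have hn : ∀ k, ∫ a, ‖f k a‖ ∂μ = ∫ a, f k a ∂μ := fun k => by
    refine MeasureTheory.integral_congr_ae ?_
    filter_upwards [h0] with a ha using by rw [Real.norm_of_nonneg (ha k)]
  have hmeas : AEStronglyMeasurable F μ := by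
    refine aestronglyMeasurable_of_tendsto_ae atTop (f := fun n a => ∑ k ∈ Finset.range n, f k a) (fun n => ?_) ?_
    · exact Finset.aestronglyMeasurable_fun_sum _ fun k _ => (hf k).aestronglyMeasurable
    · filter_upwards [hF] with a ha using ha.tendsto_sum_nat
  refine ⟨⟨hmeas, ?_⟩, ?_⟩
  · rw [hasFiniteIntegral_iff_ofReal (by filter_upwards [h0, hF] with a h1 h2 using h2.nonneg h1)]
    have e : ∫⁻ a, ENNReal.ofReal (F a) ∂μ = ∫⁻ a, ∑' k, ENNReal.ofReal (f k a) ∂μ := by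
      refine lintegral_congr_ae ?_
      filter_upwards [h0, hF] with a h1 h2
      rw [← h2.tsum_eq, ENNReal.ofReal_tsum_of_nonneg h1 h2.summable]
    rw [e, lintegral_tsum fun k => (hf k).aestronglyMeasurable.aemeasurable.ennreal_ofReal]
    simp_rw [← fun k => ofReal_integral_eq_lintegral_ofReal (hf k) (h0' k)]
    rw [← ENNReal.ofReal_tsum_of_nonneg (fun k => integral_nonneg_of_ae (h0' k)) hs]
    exact ENNReal.ofReal_lt_top
  · have h := hasSum_integral_of_summable_integral_norm hf (by simpa only [hn] using hs)
    rwa [show ∫ a, F a ∂μ = ∫ a, ∑' k, f k a ∂μ from ?_]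
    refine MeasureTheory.integral_congr_ae ?_
    filter_upwards [hF] with a ha using ha.tsum_eq.symm

lemma ioo_ae {p : ℝ → Prop} (h : ∀ x, 0 < x → x < 1 → p x) :
    ∀ᵐ x ∂(volume.restrict (Set.Ioo (0:ℝ) 1)), p x := by
  filter_upwards [ae_restrict_mem measurableSet_Ioo] with x hx using h x hx.1 hx.2

lemma integral_ioo (f : ℝ → ℝ) : ∫ x in (0:ℝ)..1, f x = ∫ x in Set.Ioo (0:ℝ) 1, f x := by
  rw [intervalIntegral.integral_of_le zero_le_one, integral_Ioc_eq_integral_Ioo]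

lemma cont_ioo {f : ℝ → ℝ} (h : Continuous f) : IntegrableOn f (Set.Ioo 0 1) :=
  (h.integrableOn_Icc (a := 0) (b := 1)).mono_set Set.Ioo_subset_Icc_self

lemma K_nonneg (k : ℝ) : 0 ≤ ellipticK k :=
  intervalIntegral.integral_nonneg (by positivity) fun θ _ => by positivity

lemma moment_K' (j : ℕ) : IntegrableOn (fun x => x ^ j * ellipticK (√(1 - x))) (Set.Ioo 0 1) ∧
    ∫ x in Set.Ioo (0:ℝ) 1, x ^ j * ellipticK (√(1 - x)) = π / 2 * mm j := by
  have hi : ∀ k, ∫ x in Set.Ioo (0:ℝ) 1, π / 2 * wb k * (x ^ j * (1 - x) ^ k) = π / 2 * (wb k * cf k j) := by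
    intro k
    rw [← integral_ioo, intervalIntegral.integral_const_mul, integral_beta]; ring
  have h := swap_sum (μ := volume.restrict (Set.Ioo (0:ℝ) 1))
    (f := fun k x => π / 2 * wb k * (x ^ j * (1 - x) ^ k))
    (F := fun x => x ^ j * ellipticK (√(1 - x)))
    (fun k => cont_ioo (by fun_prop))
    (ioo_ae fun x h0 h1 k => by
      have := wb_pos k; have : 0 < 1 - x := by linarith
      positivity)
    (ioo_ae fun x h0 h1 => by
      refine hasSum_cg (fun k => ?_) ((ellK_hasSum (x := 1 - x) (by linarith) (by linarith)).mul_left (x ^ j))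
      ring)
    (by simp_rw [hi]; exact (summable_bc j).mul_left _)
  refine ⟨h.1, ?_⟩
  have h2 := h.2
  simp_rw [hi] at h2
  exact h2.unique ((summable_bc j).hasSum.mul_left _)

lemma moment_KK' (n : ℕ) :
    IntegrableOn (fun x => x ^ n * (ellipticK (√x) * ellipticK (√(1 - x)))) (Set.Ioo 0 1) ∧
    ∫ x in Set.Ioo (0:ℝ) 1, x ^ n * (ellipticK (√x) * ellipticK (√(1 - x))) = π * vv n := by
  have hi : ∀ k, ∫ x in Set.Ioo (0:ℝ) 1, π / 2 * wb k * (x ^ (n + k) * ellipticK (√(1 - x))) = π * TT n k := by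
    intro k
    rw [MeasureTheory.integral_const_mul, (moment_K' _).2, mm_eq, TT]
    have := wb_pos (n + k)
    field_simp; ring
  have h := swap_sum (μ := volume.restrict (Set.Ioo (0:ℝ) 1))
    (f := fun k x => π / 2 * wb k * (x ^ (n + k) * ellipticK (√(1 - x))))
    (F := fun x => x ^ n * (ellipticK (√x) * ellipticK (√(1 - x))))
    (fun k => (moment_K' (n + k)).1.const_mul _)
    (ioo_ae fun x h0 h1 k => by
      have := wb_pos k; have := K_nonneg (√(1 - x))
      positivity)
    (ioo_ae fun x h0 h1 => by
      have := (ellK_hasSum h0.le h1).mul_left (x ^ n * ellipticK (√(1 - x)))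
      rw [show x ^ n * ellipticK (√(1 - x)) * ellipticK (√x) = x ^ n * (ellipticK (√x) * ellipticK (√(1 - x))) by ring] at this
      refine hasSum_cg (fun k => ?_) this
      ring)
    (by simp_rw [hi]; exact (summable_TT n).mul_left _)
  refine ⟨h.1, ?_⟩
  have h2 := h.2
  simp_rw [hi] at h2
  exact h2.unique ((summable_TT n).hasSum.mul_left _)

theorem stmt_13 (t : ℝ) (ht : 0 < t) (ht1 : t < 1) :
    (ellipticK (Real.sqrt t))^2
      = (2/π) * ∫ μ in (0:ℝ)..1,
          ellipticK (Real.sqrt μ) * ellipticK (Real.sqrt (1-μ)) / (1 - μ*t) := by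
  have hK := ellK_hasSum ht.le ht1
  have hsn : Summable fun k => ‖π / 2 * (wb k * t ^ k)‖ := hK.summable.norm
  have hsq : HasSum (fun n => (π / 2) ^ 2 * (uu n * t ^ n)) (ellipticK (√t) ^ 2) := by
    have h := (summable_norm_sum_mul_range_of_summable_norm hsn hsn).of_norm.hasSum
    rw [← tsum_mul_tsum_eq_tsum_sum_range_of_summable_norm hsn hsn, hK.tsum_eq, ← sq] at h
    refine hasSum_cg (fun n => ?_) h
    rw [uu, Finset.sum_mul, Finset.mul_sum]
    refine Finset.sum_congr rfl fun k hk => ?_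
    have : k ≤ n := by rw [Finset.mem_range] at hk; omega
    rw [show t ^ n = t ^ k * t ^ (n - k) by rw [← pow_add]; congr 1; omega]
    ring
  have hi : ∀ n, ∫ x in Set.Ioo (0:ℝ) 1, t ^ n * (x ^ n * (ellipticK (√x) * ellipticK (√(1 - x))))
      = (π / 2) * ((π / 2) ^ 2 * (uu n * t ^ n)) := by
    intro n
    rw [MeasureTheory.integral_const_mul, (moment_KK' n).2, vv_eq]; ring
  have h := swap_sum (μ := volume.restrict (Set.Ioo (0:ℝ) 1))
    (f := fun n x => t ^ n * (x ^ n * (ellipticK (√x) * ellipticK (√(1 - x)))))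
    (F := fun x => ellipticK (√x) * ellipticK (√(1 - x)) / (1 - x * t))
    (fun n => (moment_KK' n).1.const_mul _)
    (ioo_ae fun x h0 h1 n => by
      have := K_nonneg (√x); have := K_nonneg (√(1 - x))
      positivity)
    (ioo_ae fun x h0 h1 => by
      have hxt : x * t < 1 := by nlinarith
      have := (hasSum_geometric_of_lt_one (by positivity) hxt).mul_left (ellipticK (√x) * ellipticK (√(1 - x)))
      rw [← div_eq_mul_inv] at this
      refine hasSum_cg (fun n => ?_) this
      rw [mul_pow]; ring)
    (by simp_rw [hi]; exact hsq.summable.mul_left _)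
  have h2 := h.2
  simp_rw [hi] at h2
  rw [integral_ioo, h2.unique (hsq.mul_left _)]
  field_simp
end

section
/- For every x with −1 < x < 1, the Cauchy principal value P∫_{−1}^1 K(√((1+ξ)/2)) K(√((1−ξ)/2)) · 2/(π (x−ξ)) dξ equals [K(√((1+x)/2))]² − [K(√((1−x)/2))]². -/
open Real MeasureTheory intervalIntegral Filter Topology

namespace HT

/-- The arcsine kernel on `(s,t)`, extended by zero. -/
noncomputable def q (s t ξ : ℝ) : ℝ := (√(t-ξ))⁻¹ * (√(ξ-s))⁻¹

lemma q_nonneg (s t ξ : ℝ) : 0 ≤ q s t ξ := by unfold q; positivity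

lemma q_zero {s t ξ : ℝ} (h : ξ ∉ Set.Ioc s t) : q s t ξ = 0 := by
  unfold q
  by_cases h1 : s < ξ
  · have : t < ξ := by
      by_contra h2
      exact h ⟨h1, not_lt.1 h2⟩
    rw [Real.sqrt_eq_zero_of_nonpos (by linarith : t - ξ ≤ 0)]; simp
  · rw [Real.sqrt_eq_zero_of_nonpos (by linarith : ξ - s ≤ 0)]; simp

lemma q_zero' {s t ξ : ℝ} (h : ξ ∉ Set.Ioo s t) : q s t ξ = 0 := by
  by_cases h1 : ξ = t
  · unfold q; simp [h1]
  · apply q_zero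
    rintro ⟨h2, h3⟩
    exact h ⟨h2, lt_of_le_of_ne h3 h1⟩

lemma q_zero_of_le {s t : ℝ} (h : t ≤ s) (ξ : ℝ) : q s t ξ = 0 := by
  apply q_zero
  rintro ⟨h1, h2⟩
  linarith

lemma q_deriv {s t ξ : ℝ} (h : ξ ∈ Set.Ioo s t) :
    HasDerivAt (fun ξ => Real.arcsin ((2*ξ-s-t)/(t-s))) (q s t ξ) ξ := by
  obtain ⟨h1, h2⟩ := h
  have hst : 0 < t - s := by linarith
  have e1 : (2*ξ-s-t)/(t-s) ≠ -1 := by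
    intro h
    rw [div_eq_iff hst.ne'] at h
    linarith
  have e2 : (2*ξ-s-t)/(t-s) ≠ 1 := by
    intro h
    rw [div_eq_iff hst.ne'] at h
    linarith
  have hd : HasDerivAt (fun ξ : ℝ => (2*ξ-s-t)/(t-s)) (2/(t-s)) ξ := by
    have := ((((hasDerivAt_id ξ).const_mul 2).sub_const s).sub_const t).div_const (t-s)
    simpa using this
  have := (Real.hasDerivAt_arcsin e1 e2).comp ξ hd
  refine HasDerivAt.congr_deriv this ?_
  have e3 : 1 - ((2*ξ-s-t)/(t-s))^2 = (2 * (√(t-ξ) * √(ξ-s)) / (t-s))^2 := by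
    field_simp
    rw [Real.sq_sqrt (by linarith), Real.sq_sqrt (by linarith)]
    ring
  have p1 : 0 < √(t-ξ) := Real.sqrt_pos.2 (by linarith)
  have p2 : 0 < √(ξ-s) := Real.sqrt_pos.2 (by linarith)
  rw [e3, Real.sqrt_sq (by positivity)]
  unfold q
  field_simp

lemma q_contOn (s t : ℝ) :
    ContinuousOn (fun ξ => Real.arcsin ((2*ξ-s-t)/(t-s))) (Set.Icc s t) := by
  apply Continuous.continuousOn
  exact Real.continuous_arcsin.comp (by fun_prop)

lemma q_integrable (s t : ℝ) : Integrable (q s t) := by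
  have h := intervalIntegral.integrableOn_deriv_of_nonneg (q_contOn s t)
    (fun x hx => q_deriv hx) (fun x _ => q_nonneg s t x)
  exact (integrableOn_iff_integrable_of_support_subset
    (fun x hx => by by_contra h; exact hx (q_zero h))).1 h

lemma q_integral {s t : ℝ} (hst : s < t) : ∫ ξ, q s t ξ = π := by
  rw [← setIntegral_eq_integral_of_forall_compl_eq_zero (s := Set.Ioc s t)
    (fun x hx => q_zero hx), ← intervalIntegral.integral_of_le hst.le,
    intervalIntegral.integral_eq_sub_of_hasDerivAt_of_le hst.le (q_contOn s t)
    (fun x hx => q_deriv hx) (q_integrable s t).intervalIntegrable]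
  have : t - s ≠ 0 := by linarith
  rw [show (2*t-s-t)/(t-s) = 1 by field_simp; ring,
    show (2*s-s-t)/(t-s) = -1 by field_simp; ring]
  simp

lemma q_integral' {s t : ℝ} (hst : t ≤ s) : ∫ ξ, q s t ξ = 0 := by
  simp [q_zero_of_le hst]

/-- The square root on the upper half plane. -/
noncomputable def rt (z : ℂ) : ℂ := Complex.exp (Complex.log z / 2)

lemma rt_ne (z : ℂ) : rt z ≠ 0 := Complex.exp_ne_zero _

lemma rt_sq {z : ℂ} (hz : z ≠ 0) : rt z ^ 2 = z := by
  unfold rt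
  rw [← Complex.exp_nat_mul]
  convert Complex.exp_log hz using 2
  push_cast; ring

lemma rt_div_re {z w : ℂ} (hz : 0 < z.im) (hw : 0 < w.im) : 0 < (rt z / rt w).re := by
  unfold rt
  rw [← Complex.exp_sub, Complex.exp_re]
  apply mul_pos (Real.exp_pos _)
  have h1 := Complex.arg_lt_pi_iff.2 (Or.inr hz.ne')
  have h2 := Complex.arg_lt_pi_iff.2 (Or.inr hw.ne')
  have h3 := Complex.arg_nonneg_iff.2 hz.le
  have h4 := Complex.arg_nonneg_iff.2 hw.le
  have : (Complex.log z / 2 - Complex.log w / 2).im = Complex.arg z / 2 - Complex.arg w / 2 := by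
    simp [Complex.log_im]
  rw [this]
  apply Real.cos_pos_of_mem_Ioo
  constructor <;> linarith

lemma slit1 {p r : ℝ} {c : ℂ} (hc : 0 < c.re) (_hp : 0 ≤ p) (hr : 0 ≤ r) (h : 0 < p + r) :
    (p:ℂ) + Complex.I * c * r ∈ Complex.slitPlane := by
  rw [Complex.mem_slitPlane_iff]
  rcases hr.eq_or_lt with h0 | h0
  · left; subst h0; simpa using h
  · right; simp; exact ⟨hc.ne', h0.ne'⟩

lemma slit2 {p r : ℝ} {c : ℂ} (hc : 0 < c.re) (_hp : 0 ≤ p) (hr : 0 ≤ r) (h : 0 < p + r) :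
    (p:ℂ) - Complex.I * c * r ∈ Complex.slitPlane := by
  rw [Complex.mem_slitPlane_iff]
  rcases hr.eq_or_lt with h0 | h0
  · left; subst h0; simpa using h
  · right; simp; exact ⟨hc.ne', h0.ne'⟩

lemma sub_ne_zero_of_im {z : ℂ} (hz : 0 < z.im) (ξ : ℝ) : z - ξ ≠ 0 := by
  intro h
  have := congrArg Complex.im h
  simp at this
  linarith

lemma cq_integrable (s t : ℝ) {z : ℂ} (hz : 0 < z.im) :
    Integrable (fun ξ : ℝ => (q s t ξ : ℂ) / (z - ξ)) := by
  have h : Integrable (fun ξ : ℝ => (q s t ξ : ℂ)) := (q_integrable s t).ofReal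
  have hc : Continuous (fun ξ : ℝ => (z - ξ)⁻¹) := by
    apply Continuous.inv₀ (by fun_prop)
    exact fun ξ => sub_ne_zero_of_im hz ξ
  refine (h.mul_bdd (c := z.im⁻¹) hc.aestronglyMeasurable (Eventually.of_forall ?_)).congr
    (Eventually.of_forall fun ξ => by simp [div_eq_mul_inv])
  intro ξ
  rw [norm_inv]
  apply inv_anti₀ hz
  have := Complex.abs_im_le_norm (z - ξ)
  simp at this
  exact (le_abs_self _).trans this

lemma cq_deriv {s t ξ : ℝ} {z : ℂ} (hz : 0 < z.im) (h : ξ ∈ Set.Ioo s t) :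
    HasDerivAt (fun ξ : ℝ => (Complex.log ((√(t-ξ):ℝ) + Complex.I * (rt (z-t) / rt (z-s)) * (√(ξ-s):ℝ))
      - Complex.log ((√(t-ξ):ℝ) - Complex.I * (rt (z-t) / rt (z-s)) * (√(ξ-s):ℝ)))
        / (Complex.I * rt (z-s) * rt (z-t)))
      ((q s t ξ : ℂ) / (z - ξ)) ξ := by
  obtain ⟨h1, h2⟩ := h
  have hc : 0 < (rt (z-t) / rt (z-s)).re := rt_div_re (by simpa using hz) (by simpa using hz)
  have p1 : 0 < √(t-ξ) := Real.sqrt_pos.2 (by linarith)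
  have p2 : 0 < √(ξ-s) := Real.sqrt_pos.2 (by linarith)
  have s1 := slit1 hc p1.le p2.le (by linarith)
  have s2 := slit2 hc p1.le p2.le (by linarith)
  have d1 : HasDerivAt (fun ξ : ℝ => ((√(t-ξ):ℝ):ℂ)) ((-1/(2*√(t-ξ)) : ℝ):ℂ) ξ := by
    apply HasDerivAt.ofReal_comp
    have := ((hasDerivAt_id ξ).const_sub t).sqrt (by simp; linarith)
    simpa using this
  have d2 : HasDerivAt (fun ξ : ℝ => ((√(ξ-s):ℝ):ℂ)) ((1/(2*√(ξ-s)) : ℝ):ℂ) ξ := by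
    apply HasDerivAt.ofReal_comp
    have := ((hasDerivAt_id ξ).sub_const s).sqrt (by simp; linarith)
    simpa using this
  have d3 := ((d1.add (d2.const_mul (Complex.I * (rt (z-t) / rt (z-s))))).clog_real s1).sub
    ((d1.sub (d2.const_mul (Complex.I * (rt (z-t) / rt (z-s))))).clog_real s2)
  have d4 := d3.div_const (Complex.I * rt (z-s) * rt (z-t))
  refine d4.congr_deriv ?_
  have n1 := Complex.slitPlane_ne_zero s1
  have n2 := Complex.slitPlane_ne_zero s2
  have ha := rt_ne (z-s)
  have hb := rt_ne (z-t)
  have ea := rt_sq (sub_ne_zero_of_im hz s)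
  have eb := rt_sq (sub_ne_zero_of_im hz t)
  have hzz := sub_ne_zero_of_im hz ξ
  have ep : ((√(t-ξ):ℝ):ℂ)^2 = t - ξ := by
    rw [← Complex.ofReal_pow, Real.sq_sqrt (by linarith)]; push_cast; ring
  have er : ((√(ξ-s):ℝ):ℂ)^2 = ξ - s := by
    rw [← Complex.ofReal_pow, Real.sq_sqrt (by linarith)]; push_cast; ring
  have np : ((√(t-ξ):ℝ):ℂ) ≠ 0 := by exact_mod_cast p1.ne'
  have nr : ((√(ξ-s):ℝ):ℂ) ≠ 0 := by exact_mod_cast p2.ne'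
  unfold q
  push_cast
  simp only [Pi.add_apply, Pi.sub_apply]
  generalize ((√(t-ξ):ℝ):ℂ) = p at *
  generalize ((√(ξ-s):ℝ):ℂ) = r at *
  generalize rt (z-s) = a at *
  generalize rt (z-t) = b at *
  have hts : ((t:ℂ) - s) ≠ 0 := by
    have : t - s ≠ 0 := by linarith
    exact_mod_cast this
  have key : a^2 * ((p + Complex.I * (b/a) * r) * (p - Complex.I * (b/a) * r))
      = (t - s) * (z - ξ) := by
    have : a^2 * ((p + Complex.I * (b/a) * r) * (p - Complex.I * (b/a) * r))
      = a^2*p^2 - Complex.I^2 * b^2 * r^2 := by field_simp; ring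
    rw [this, Complex.I_sq, ea, eb, ep, er]; ring
  have key2 : z - ξ = a^2 * ((p + Complex.I * (b/a) * r) * (p - Complex.I * (b/a) * r)) / (t-s) := by
    rw [key]; field_simp
  have key3 : (t:ℂ) - s = p^2 + r^2 := by rw [ep, er]; ring
  rw [key2, div_sub_div _ _ n1 n2, key3]
  rw [key3] at hts
  generalize hA : p + Complex.I * (b/a) * r = A at *
  generalize hB : p - Complex.I * (b/a) * r = B at *
  have hI := Complex.I_ne_zero
  field_simp
  rw [← hA, ← hB]
  field_simp
  ring

lemma cq_integral {s t : ℝ} (hst : s < t) {z : ℂ} (hz : 0 < z.im) :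
    ∫ ξ : ℝ, (q s t ξ : ℂ) / (z - ξ) = π * (rt (z-s))⁻¹ * (rt (z-t))⁻¹ := by
  have hc : 0 < (rt (z-t) / rt (z-s)).re := rt_div_re (by simpa using hz) (by simpa using hz)
  rw [← setIntegral_eq_integral_of_forall_compl_eq_zero (s := Set.Ioc s t)
    (fun x hx => by rw [q_zero hx]; simp), ← intervalIntegral.integral_of_le hst.le,
    intervalIntegral.integral_eq_sub_of_hasDerivAt_of_le hst.le ?_
    (fun x hx => cq_deriv hz hx) (cq_integrable s t hz).intervalIntegrable]
  · have hp : 0 < √(t-s) := Real.sqrt_pos.2 (by linarith)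
    have ha := rt_ne (z-s)
    have hb := rt_ne (z-t)
    simp only [sub_self, Real.sqrt_zero, Complex.ofReal_zero, mul_zero, add_zero, sub_zero, zero_add,
      zero_div, zero_sub]
    have h1 : Complex.I * (rt (z-t) / rt (z-s)) * (√(t-s):ℝ)
        = (√(t-s):ℝ) * (Complex.I * (rt (z-t) / rt (z-s))) := by ring
    rw [h1, ← mul_neg, Complex.log_ofReal_mul hp (by simp [ha, hb]),
      Complex.log_ofReal_mul hp (by simp [ha, hb])]
    have h2 : Complex.log (-(Complex.I * (rt (z-t) / rt (z-s))))
        = Complex.log (Complex.I * (rt (z-t) / rt (z-s))) - π * Complex.I := by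
      unfold Complex.log
      rw [norm_neg, Complex.arg_neg_eq_arg_sub_pi_of_im_pos (by simpa using hc)]
      push_cast; ring
    rw [h2]
    have hI := Complex.I_ne_zero
    field_simp
    ring
  · apply ContinuousOn.div_const
    apply ContinuousOn.sub
    · apply ContinuousOn.clog (by fun_prop)
      intro x hx
      apply slit1 hc (Real.sqrt_nonneg _) (Real.sqrt_nonneg _)
      rcases hx.1.eq_or_lt with h | h
      · have := Real.sqrt_pos.2 (by linarith : 0 < t - x)
        positivity
      · have := Real.sqrt_pos.2 (by linarith : 0 < x - s)
        positivity
    · apply ContinuousOn.clog (by fun_prop)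
      intro x hx
      apply slit2 hc (Real.sqrt_nonneg _) (Real.sqrt_nonneg _)
      rcases hx.1.eq_or_lt with h | h
      · have := Real.sqrt_pos.2 (by linarith : 0 < t - x)
        positivity
      · have := Real.sqrt_pos.2 (by linarith : 0 < x - s)
        positivity

/-- The weight `1/√(1-s²)` extended by zero. -/
noncomputable def w (s : ℝ) : ℝ := q (-1) 1 s

/-- Abel transform from the left. -/
noncomputable def k1 (ξ : ℝ) : ℝ := ∫ s, w s * (√(ξ-s))⁻¹

/-- Abel transform from the right. -/
noncomputable def k2 (ξ : ℝ) : ℝ := ∫ t, w t * (√(t-ξ))⁻¹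

lemma w_nonneg (s : ℝ) : 0 ≤ w s := q_nonneg _ _ _

lemma w_integrable : Integrable w := q_integrable _ _

lemma w_meas : Measurable w := by
  unfold w q; fun_prop

lemma q_meas : Measurable (fun p : ℝ × (ℝ × ℝ) => q p.2.1 p.2.2 p.1) := by
  unfold q; fun_prop

/-- The kernel of the triple integral. -/
noncomputable def H (p : ℝ × (ℝ × ℝ)) : ℝ := w p.2.1 * w p.2.2 * q p.2.1 p.2.2 p.1

lemma H_nonneg (p : ℝ × (ℝ × ℝ)) : 0 ≤ H p :=
  mul_nonneg (mul_nonneg (w_nonneg _) (w_nonneg _)) (q_nonneg _ _ _)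

lemma H_meas : Measurable H := by
  unfold H
  have := w_meas
  have := q_meas
  fun_prop

lemma H_integrable : Integrable H (volume.prod (volume.prod volume)) := by
  rw [integrable_prod_iff' H_meas.aestronglyMeasurable]
  constructor
  · refine Eventually.of_forall fun p => ?_
    exact (q_integrable p.1 p.2).const_mul (w p.1 * w p.2)
  · have hb : Integrable (fun p : ℝ × ℝ => w p.1 * w p.2 * π) (volume.prod volume) :=
      (w_integrable.mul_prod w_integrable).mul_const π
    refine hb.mono' ?_ (Eventually.of_forall fun p => ?_)
    · exact (H_meas.norm.stronglyMeasurable.integral_prod_left').aestronglyMeasurable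
    · have h1 : ∫ x, ‖H (x, p)‖ = w p.1 * w p.2 * ∫ ξ, q p.1 p.2 ξ := by
        rw [← MeasureTheory.integral_const_mul]
        apply MeasureTheory.integral_congr_ae (Eventually.of_forall fun x => ?_)
        rw [Real.norm_of_nonneg (H_nonneg _)]
        rfl
      have h2 : ∫ ξ, q p.1 p.2 ξ ≤ π := by
        rcases lt_or_ge p.1 p.2 with h | h
        · rw [q_integral h]
        · rw [q_integral' h]; exact Real.pi_pos.le
      have h3 : 0 ≤ ∫ ξ, q p.1 p.2 ξ := integral_nonneg (q_nonneg _ _)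
      have h4 := mul_nonneg (w_nonneg p.1) (w_nonneg p.2)
      rw [h1, Real.norm_of_nonneg (mul_nonneg h4 h3)]
      exact mul_le_mul_of_nonneg_left h2 h4

lemma H_marg (ξ : ℝ) : ∫ p, H (ξ, p) ∂(volume.prod volume) = k1 ξ * k2 ξ := by
  unfold k1 k2
  rw [← integral_prod_mul]
  apply MeasureTheory.integral_congr_ae (Eventually.of_forall fun x => ?_)
  simp only [H, q]
  ring

lemma kk_integrable : Integrable (fun ξ => k1 ξ * k2 ξ) := by
  have := H_integrable.integral_prod_left
  exact this.congr (Eventually.of_forall H_marg)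

lemma im_le_norm {z : ℂ} (ξ : ℝ) : z.im ≤ ‖z - ξ‖ := by
  have := Complex.abs_im_le_norm (z - ξ)
  simp at this
  exact (le_abs_self _).trans this

lemma ae_ne : ∀ᵐ p : ℝ × ℝ ∂(volume.prod volume), p.1 ≠ p.2 := by
  have hm : MeasurableSet {p : ℝ × ℝ | p.1 = p.2} := measurableSet_eq_fun measurable_fst measurable_snd
  rw [ae_iff]
  simp only [ne_eq, not_not]
  rw [Measure.measure_prod_null hm]
  refine Eventually.of_forall fun x => ?_
  have : Prod.mk x ⁻¹' {p : ℝ × ℝ | p.1 = p.2} = {x} := by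
    ext y; simp [eq_comm]
  simp [this]

lemma cauchy {z : ℂ} (hz : 0 < z.im) :
    ∫ ξ : ℝ, ((k1 ξ * k2 ξ : ℝ) : ℂ) / (z - ξ)
      = π / 2 * (∫ s : ℝ, (w s : ℂ) * (rt (z-s))⁻¹) ^ 2 := by
  have hc : Continuous (fun ξ : ℝ => (z - ξ)⁻¹) := by
    apply Continuous.inv₀ (by fun_prop)
    exact fun ξ => sub_ne_zero_of_im hz ξ
  have hHint : Integrable (fun p : ℝ × (ℝ × ℝ) => (H p : ℂ) * (z - p.1)⁻¹)
      (volume.prod (volume.prod volume)) := by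
    refine H_integrable.ofReal.mul_bdd (c := z.im⁻¹)
      (hc.comp continuous_fst).aestronglyMeasurable (Eventually.of_forall ?_)
    intro p
    rw [norm_inv]
    exact inv_anti₀ hz (im_le_norm _)
  set u : ℝ → ℂ := fun s => (w s : ℂ) * (rt (z-s))⁻¹ with hu
  set g : ℝ × ℝ → ℂ := fun p => ∫ ξ : ℝ, (H (ξ, p) : ℂ) * (z - ξ)⁻¹ with hg
  have hgi : Integrable g (volume.prod volume) := hHint.integral_prod_right
  have hgv : ∀ p, g p = if p.1 < p.2 then π * (u p.1 * u p.2) else 0 := by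
    intro p
    have h1 : g p = (w p.1 * w p.2 : ℂ) * ∫ ξ : ℝ, (q p.1 p.2 ξ : ℂ) / (z - ξ) := by
      rw [← MeasureTheory.integral_const_mul]
      apply MeasureTheory.integral_congr_ae (Eventually.of_forall fun x => ?_)
      simp only [H]
      push_cast
      ring
    rw [h1]
    split_ifs with h
    · rw [cq_integral h hz]; simp only [hu]; ring
    · simp [q_zero_of_le (not_lt.1 h)]
  have e1 : ∫ ξ : ℝ, ((k1 ξ * k2 ξ : ℝ) : ℂ) / (z - ξ) = ∫ p, g p ∂(volume.prod volume) := by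
    rw [← integral_integral_swap (f := fun (ξ:ℝ) (p : ℝ × ℝ) => (H (ξ, p) : ℂ) * (z - ξ)⁻¹) hHint]
    apply MeasureTheory.integral_congr_ae (Eventually.of_forall fun ξ => ?_)
    have hm : ∫ p, (H (ξ, p) : ℂ) ∂(volume.prod volume) = ((k1 ξ * k2 ξ : ℝ) : ℂ) := by
      rw [← H_marg]; exact _root_.integral_ofReal
    change _ = ∫ p, (H (ξ, p) : ℂ) * (z - ξ)⁻¹ ∂(volume.prod volume)
    rw [MeasureTheory.integral_mul_const, hm, div_eq_mul_inv]
  have e2 : ∫ p, g p.swap ∂(volume.prod volume) = ∫ p, g p ∂(volume.prod volume) :=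
    integral_prod_swap g
  have e3 : ∫ p, (g p + g p.swap) ∂(volume.prod volume) = π * (∫ s, u s)^2 := by
    rw [sq, ← integral_prod_mul, ← MeasureTheory.integral_const_mul]
    apply MeasureTheory.integral_congr_ae
    filter_upwards [ae_ne] with p hp
    rw [hgv, hgv]
    simp only [Prod.fst_swap, Prod.snd_swap]
    rcases lt_or_gt_of_ne hp with h | h
    · simp [h, h.le.not_gt]
    · simp [h, h.le.not_gt]; ring
  have hgs : Integrable (fun p : ℝ × ℝ => g p.swap) (volume.prod volume) := hgi.swap
  have e4 := MeasureTheory.integral_add hgi hgs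
  rw [e3, e2] at e4
  rw [e1]
  clear_value g u
  linear_combination -e4 / 2

lemma w_neg (s : ℝ) : w (-s) = w s := by
  unfold w q
  rw [show 1 - -s = s - -1 by ring, show -s - -1 = 1 - s by ring, mul_comm]

lemma k2_eq (ξ : ℝ) : k2 ξ = k1 (-ξ) := by
  unfold k1 k2
  rw [← integral_neg_eq_self]
  simp only [w_neg]
  congr 1
  ext s
  rw [show -s - ξ = -ξ - s by ring]

lemma ab_zero {ξ s : ℝ} (hξ : ξ < 1) (h : s ∉ Set.Ioo (-1) ξ) : w s * (√(ξ-s))⁻¹ = 0 := by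
  by_cases h1 : s < ξ
  · have : w s = 0 := by
      apply q_zero'
      rintro ⟨h2, h3⟩
      exact h ⟨h2, h1⟩
    simp [this]
  · rw [Real.sqrt_eq_zero_of_nonpos (by linarith)]; simp

lemma sub_image {ξ : ℝ} (hξ : -1 < ξ) :
    (fun θ => (1+ξ) * Real.sin θ ^ 2 - 1) '' Set.Ioo 0 (π/2) = Set.Ioo (-1) ξ := by
  ext s
  constructor
  · rintro ⟨θ, ⟨h1, h2⟩, rfl⟩
    have hs : 0 < Real.sin θ := Real.sin_pos_of_pos_of_lt_pi h1 (by linarith)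
    have hc : 0 < Real.cos θ := Real.cos_pos_of_mem_Ioo ⟨by linarith, h2⟩
    have := Real.sin_sq_add_cos_sq θ
    have p : 0 < 1 + ξ := by linarith
    constructor
    · have : 0 < (1+ξ) * Real.sin θ ^ 2 := by positivity
      simp only; linarith
    · have : 0 < (1+ξ) * Real.cos θ ^ 2 := by positivity
      simp only; nlinarith
  · rintro ⟨h1, h2⟩
    have p : 0 < 1 + ξ := by linarith
    have r0 : 0 < (1+s)/(1+ξ) := div_pos (by linarith) p
    have r1 : (1+s)/(1+ξ) < 1 := by rw [div_lt_one p]; linarith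
    have q0 : 0 < √((1+s)/(1+ξ)) := Real.sqrt_pos.2 r0
    have q1 : √((1+s)/(1+ξ)) < 1 := by
      rw [Real.sqrt_lt' one_pos]; simpa using r1
    refine ⟨Real.arcsin (√((1+s)/(1+ξ))), ⟨Real.arcsin_pos.2 q0, Real.arcsin_lt_pi_div_two.2 q1⟩, ?_⟩
    simp only
    rw [Real.sin_arcsin (by linarith) q1.le, Real.sq_sqrt r0.le]
    field_simp
    ring

lemma sub_inj {ξ : ℝ} (hξ : -1 < ξ) :
    Set.InjOn (fun θ => (1+ξ) * Real.sin θ ^ 2 - 1) (Set.Ioo 0 (π/2)) := by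
  rintro a ⟨a1, a2⟩ b ⟨b1, b2⟩ h
  have p : 0 < 1 + ξ := by linarith
  have h' : Real.sin a ^ 2 = Real.sin b ^ 2 := by
    have : (1+ξ) * Real.sin a ^ 2 = (1+ξ) * Real.sin b ^ 2 := by
      simp only at h; linarith
    exact mul_left_cancel₀ p.ne' this
  have sa : 0 < Real.sin a := Real.sin_pos_of_pos_of_lt_pi a1 (by linarith)
  have sb : 0 < Real.sin b := Real.sin_pos_of_pos_of_lt_pi b1 (by linarith)
  have h2 : Real.sin a = Real.sin b := by
    exact (pow_left_inj₀ sa.le sb.le two_ne_zero).1 h'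
  exact Real.injOn_sin ⟨by linarith, by linarith⟩ ⟨by linarith, by linarith⟩ h2

lemma sub_deriv (ξ θ : ℝ) : HasDerivAt (fun θ => (1+ξ) * Real.sin θ ^ 2 - 1)
    ((1+ξ) * (2 * Real.sin θ * Real.cos θ)) θ := by
  have := (((Real.hasDerivAt_sin θ).pow 2).const_mul (1+ξ)).sub_const 1
  simpa using this

lemma den_pos {ξ : ℝ} (hξ : ξ ∈ Set.Ioo (-1:ℝ) 1) (θ : ℝ) :
    0 < 1 - (1+ξ)/2 * Real.sin θ ^ 2 := by
  have h1 := Real.sin_sq_le_one θ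
  have h2 := sq_nonneg (Real.sin θ)
  obtain ⟨h3, h4⟩ := hξ
  nlinarith

lemma sub_integrand {ξ θ : ℝ} (hξ : ξ ∈ Set.Ioo (-1:ℝ) 1) (hθ : θ ∈ Set.Ioo 0 (π/2)) :
    |(1+ξ) * (2 * Real.sin θ * Real.cos θ)| •
      (w ((1+ξ) * Real.sin θ ^ 2 - 1) * (√(ξ-((1+ξ) * Real.sin θ ^ 2 - 1)))⁻¹)
    = √2 * (1 / √(1 - (1+ξ)/2 * Real.sin θ ^ 2)) := by
  obtain ⟨h1, h2⟩ := hθ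
  have hs : 0 < Real.sin θ := Real.sin_pos_of_pos_of_lt_pi h1 (by linarith)
  have hc : 0 < Real.cos θ := Real.cos_pos_of_mem_Ioo ⟨by linarith, h2⟩
  have p : 0 < 1 + ξ := by linarith [hξ.1]
  have hd := den_pos hξ θ
  have e := Real.sin_sq_add_cos_sq θ
  have e1 : ξ-((1+ξ) * Real.sin θ ^ 2 - 1) = (1+ξ) * Real.cos θ ^ 2 := by
    linear_combination -(1+ξ)*e
  have e2 : 1 - ((1+ξ) * Real.sin θ ^ 2 - 1) = 2 * (1 - (1+ξ)/2 * Real.sin θ ^ 2) := by ring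
  have e3 : (1+ξ) * Real.sin θ ^ 2 - 1 - -1 = (1+ξ) * Real.sin θ ^ 2 := by ring
  rw [e1]
  unfold w q
  rw [e2, e3, abs_of_pos (by positivity), smul_eq_mul, Real.sqrt_mul p.le, Real.sqrt_mul p.le,
    Real.sqrt_mul (by norm_num), Real.sqrt_sq hs.le, Real.sqrt_sq hc.le]
  have d1 : 0 < √(1 - (1+ξ)/2 * Real.sin θ ^ 2) := Real.sqrt_pos.2 hd
  have d2 : 0 < √(1+ξ) := Real.sqrt_pos.2 p
  have d3 : √(1+ξ)^2 = 1+ξ := Real.sq_sqrt p.le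
  have d4 : √2^2 = (2:ℝ) := Real.sq_sqrt (by norm_num)
  have d5 : 0 < √(2:ℝ) := by positivity
  generalize √(1 - (1+ξ)/2 * Real.sin θ ^ 2) = D at *
  field_simp
  rw [d3, d4]
  ring

/-- the trigonometric form -/
noncomputable def kt (ξ : ℝ) : ℝ := ∫ θ in (0:ℝ)..(π/2), 1 / √(1 - (1+ξ)/2 * Real.sin θ ^ 2)

lemma kt_cont {ξ : ℝ} (hξ : ξ ∈ Set.Ioo (-1:ℝ) 1) :
    Continuous (fun θ => 1 / √(1 - (1+ξ)/2 * Real.sin θ ^ 2)) := by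
  apply Continuous.div continuous_const (by fun_prop)
  exact fun θ => (Real.sqrt_pos.2 (den_pos hξ θ)).ne'

lemma ab_integrable {ξ : ℝ} (hξ : ξ ∈ Set.Ioo (-1:ℝ) 1) :
    Integrable (fun s => w s * (√(ξ-s))⁻¹) := by
  have h : IntegrableOn (fun s => w s * (√(ξ-s))⁻¹) (Set.Ioo (-1) ξ) := by
    rw [← sub_image hξ.1, integrableOn_image_iff_integrableOn_abs_deriv_smul measurableSet_Ioo
      (fun θ _ => (sub_deriv ξ θ).hasDerivWithinAt) (sub_inj hξ.1)]
    rw [integrableOn_congr_fun (fun θ hθ => sub_integrand hξ hθ) measurableSet_Ioo]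
    exact (((kt_cont hξ).const_mul (√2)).integrableOn_Icc (a := 0) (b := π/2)).mono_set
      Set.Ioo_subset_Icc_self
  exact (integrableOn_iff_integrable_of_support_subset
    (fun x hx => by by_contra h; exact hx (ab_zero hξ.2 h))).1 h

lemma k1_eq {ξ : ℝ} (hξ : ξ ∈ Set.Ioo (-1:ℝ) 1) : k1 ξ = √2 * kt ξ := by
  unfold k1 kt
  rw [← setIntegral_eq_integral_of_forall_compl_eq_zero (s := Set.Ioo (-1) ξ)
    (fun x hx => ab_zero hξ.2 hx), ← sub_image hξ.1,
    integral_image_eq_integral_abs_deriv_smul measurableSet_Ioo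
      (fun θ _ => (sub_deriv ξ θ).hasDerivWithinAt) (sub_inj hξ.1),
    setIntegral_congr_fun measurableSet_Ioo (fun θ hθ => sub_integrand hξ hθ),
    MeasureTheory.integral_const_mul, intervalIntegral.integral_of_le (by positivity),
    MeasureTheory.integral_Ioc_eq_integral_Ioo]

lemma ellK1 {ξ : ℝ} (hξ : ξ ∈ Set.Ioo (-1:ℝ) 1) : k1 ξ = √2 * ellipticK (√((1+ξ)/2)) := by
  rw [k1_eq hξ]
  unfold kt ellipticK
  rw [Real.sq_sqrt (by linarith [hξ.1])]

lemma neg_mem {ξ : ℝ} (hξ : ξ ∈ Set.Ioo (-1:ℝ) 1) : -ξ ∈ Set.Ioo (-1:ℝ) 1 :=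
  ⟨by linarith [hξ.2], by linarith [hξ.1]⟩

lemma ellK2 {ξ : ℝ} (hξ : ξ ∈ Set.Ioo (-1:ℝ) 1) : k2 ξ = √2 * ellipticK (√((1-ξ)/2)) := by
  rw [k2_eq, ellK1 (neg_mem hξ)]; rfl

lemma ab_integrable2 {ξ : ℝ} (hξ : ξ ∈ Set.Ioo (-1:ℝ) 1) :
    Integrable (fun s => w s * (√(s-ξ))⁻¹) := by
  have := (ab_integrable (neg_mem hξ)).comp_neg
  refine this.congr (Eventually.of_forall fun s => ?_)
  simp only [w_neg]
  rw [show -ξ - -s = s - ξ by ring]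

lemma kt_contAt {x : ℝ} (hx : x ∈ Set.Ioo (-1:ℝ) 1) : ContinuousAt kt x := by
  obtain ⟨h1, h2⟩ := hx
  unfold kt
  apply intervalIntegral.continuousAt_of_dominated_interval (bound := fun _ => 1 / √((1-x)/4))
  · filter_upwards [Ioo_mem_nhds h1 h2] with ξ hξ
    exact (kt_cont hξ).aestronglyMeasurable
  · filter_upwards [Ioo_mem_nhds h1 (by linarith : x < (1+x)/2)] with ξ hξ
    refine Eventually.of_forall fun θ _ => ?_
    rw [Real.norm_of_nonneg (by positivity)]
    apply one_div_le_one_div_of_le (Real.sqrt_pos.2 (by linarith))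
    apply Real.sqrt_le_sqrt
    have a1 := Real.sin_sq_le_one θ
    have a2 := sq_nonneg (Real.sin θ)
    nlinarith [hξ.1, hξ.2]
  · exact intervalIntegrable_const
  · refine Eventually.of_forall fun θ _ => ?_
    apply ContinuousAt.div continuousAt_const (by fun_prop)
    exact (Real.sqrt_pos.2 (den_pos ⟨h1, h2⟩ θ)).ne'

lemma k1_contAt {x : ℝ} (hx : x ∈ Set.Ioo (-1:ℝ) 1) : ContinuousAt k1 x := by
  have h : ContinuousAt (fun ξ => √2 * kt ξ) x := continuousAt_const.mul (kt_contAt hx)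
  apply h.congr
  filter_upwards [Ioo_mem_nhds hx.1 hx.2] with ξ hξ
  exact (k1_eq hξ).symm

lemma kk_contAt {x : ℝ} (hx : x ∈ Set.Ioo (-1:ℝ) 1) : ContinuousAt (fun ξ => k1 ξ * k2 ξ) x := by
  have h : k2 = fun ξ => k1 (-ξ) := funext k2_eq
  rw [h]
  apply (k1_contAt hx).mul
  exact ContinuousAt.comp (f := fun ξ : ℝ => -ξ) (k1_contAt (neg_mem hx)) continuousAt_neg

lemma kk_zero {ξ : ℝ} (hξ : ξ ∉ Set.Ioo (-1:ℝ) 1) : k1 ξ * k2 ξ = 0 := by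
  by_cases h : ξ < 1
  · have h' : ξ ≤ -1 := by
      by_contra h2
      exact hξ ⟨not_le.1 h2, h⟩
    have : k1 ξ = 0 := by
      unfold k1
      rw [MeasureTheory.integral_congr_ae (g := fun _ => (0:ℝ)), integral_zero]
      refine Eventually.of_forall fun s => ab_zero h ?_
      rintro ⟨a, b⟩
      linarith
    simp [this]
  · have : k2 ξ = 0 := by
      rw [k2_eq]
      unfold k1
      rw [MeasureTheory.integral_congr_ae (g := fun _ => (0:ℝ)), integral_zero]
      refine Eventually.of_forall fun s => ab_zero (by linarith) ?_
      rintro ⟨a, b⟩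
      linarith
    simp [this]

lemma rt_norm {z : ℂ} (hz : z ≠ 0) : ‖rt z‖ = √‖z‖ := by
  have := congrArg norm (rt_sq hz)
  rw [norm_pow] at this
  rw [← this, Real.sqrt_sq (norm_nonneg _)]

lemma rt_lim_pos {y : ℝ} (hy : 0 < y) :
    Tendsto (fun ε : ℝ => rt (y + ε * Complex.I)) (𝓝[>] 0) (𝓝 (√y : ℝ)) := by
  have h0 : rt (y : ℂ) = (√y : ℝ) := by
    unfold rt
    rw [← Complex.ofReal_log hy.le, Real.sqrt_eq_rpow, Real.rpow_def_of_pos hy]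
    push_cast
    congr 1
    ring
  rw [← h0]
  have hc : ContinuousAt rt (y:ℂ) := by
    unfold rt
    apply Complex.continuous_exp.continuousAt.comp
    exact (continuousAt_clog (by simp [Complex.mem_slitPlane_iff, hy])).div_const 2
  refine hc.tendsto.comp ?_
  have : Continuous (fun ε : ℝ => (y:ℂ) + ε * Complex.I) := by fun_prop
  have h := this.tendsto 0
  simp at h
  exact h.mono_left nhdsWithin_le_nhds

lemma rt_lim_neg {y : ℝ} (hy : y < 0) :
    Tendsto (fun ε : ℝ => rt (y + ε * Complex.I)) (𝓝[>] 0) (𝓝 (Complex.I * (√(-y) : ℝ))) := by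
  have h0 : rt (y : ℂ) = Complex.I * (√(-y) : ℝ) := by
    unfold rt
    have : Complex.log (y:ℂ) = (Real.log (-y) : ℝ) + π * Complex.I := by
      unfold Complex.log
      rw [Complex.arg_ofReal_of_neg hy, Complex.norm_real, Real.norm_eq_abs, abs_of_neg hy]
    rw [this, Real.sqrt_eq_rpow, Real.rpow_def_of_pos (by linarith : 0 < -y), add_div, Complex.exp_add,
      show (π * Complex.I / 2 : ℂ) = π / 2 * Complex.I by ring, Complex.exp_pi_div_two_mul_I]
    push_cast
    rw [mul_comm]
    congr 2
    ring
  rw [← h0]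
  have hc : ContinuousWithinAt rt {z | 0 ≤ z.im} (y:ℂ) := by
    unfold rt
    apply Complex.continuous_exp.continuousAt.comp_continuousWithinAt
    exact (Complex.continuousWithinAt_log_of_re_neg_of_im_zero (by simpa using hy) (by simp)).div_const 2
  refine hc.tendsto.comp ?_
  have : Continuous (fun ε : ℝ => (y:ℂ) + ε * Complex.I) := by fun_prop
  have h := this.tendsto 0
  simp at h
  refine tendsto_nhdsWithin_iff.2 ⟨h.mono_left nhdsWithin_le_nhds, ?_⟩
  filter_upwards [self_mem_nhdsWithin] with ε hε
  have : 0 < ε := hε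
  simpa using this.le

lemma rt_meas : Measurable rt := by
  unfold rt
  fun_prop

lemma phi_lim {x : ℝ} (hx : x ∈ Set.Ioo (-1:ℝ) 1) :
    Tendsto (fun ε : ℝ => ∫ s : ℝ, (w s : ℂ) * (rt ((x + ε * Complex.I) - s))⁻¹) (𝓝[>] 0)
      (𝓝 ((k1 x : ℂ) - Complex.I * k2 x)) := by
  have hl : (k1 x : ℂ) - Complex.I * k2 x = ∫ s : ℝ, (((w s * (√(x-s))⁻¹ : ℝ) : ℂ)
      - Complex.I * ((w s * (√(s-x))⁻¹ : ℝ) : ℂ)) := by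
    rw [MeasureTheory.integral_sub (ab_integrable hx).ofReal ((ab_integrable2 hx).ofReal.const_mul _),
      MeasureTheory.integral_const_mul]
    unfold k1 k2
    congr 1
    · exact _root_.integral_ofReal.symm
    · congr 1
      exact _root_.integral_ofReal.symm
  rw [hl]
  have hne : ∀ᵐ s : ℝ, s ≠ x := by
    simp [ae_iff]
  apply MeasureTheory.tendsto_integral_filter_of_dominated_convergence
    (fun s => w s * (√(x-s))⁻¹ + w s * (√(s-x))⁻¹)
  · refine Eventually.of_forall fun ε => ?_
    have := rt_meas
    have := w_meas
    apply Measurable.aestronglyMeasurable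
    fun_prop
  · filter_upwards [self_mem_nhdsWithin] with ε hε
    have hε : 0 < ε := hε
    filter_upwards [hne] with s hs
    have hz : ((x + ε * Complex.I) - s : ℂ) ≠ 0 := sub_ne_zero_of_im (by simpa using hε) s
    rw [norm_mul, norm_inv, rt_norm hz, Complex.norm_real, Real.norm_of_nonneg (w_nonneg s), ← mul_add]
    apply mul_le_mul_of_nonneg_left _ (w_nonneg s)
    have h1 : |x - s| ≤ ‖((x + ε * Complex.I) - s : ℂ)‖ := by
      have := Complex.abs_re_le_norm ((x + ε * Complex.I) - s : ℂ)
      simpa using this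
    have h2 : 0 < |x - s| := abs_pos.2 (sub_ne_zero.2 hs.symm)
    have h3 : (√‖((x + ε * Complex.I) - s : ℂ)‖)⁻¹ ≤ (√|x-s|)⁻¹ :=
      inv_anti₀ (Real.sqrt_pos.2 h2) (Real.sqrt_le_sqrt h1)
    refine h3.trans ?_
    rcases abs_cases (x-s) with ⟨h, _⟩ | ⟨h, _⟩
    · rw [h]
      have : 0 ≤ (√(s-x))⁻¹ := by positivity
      linarith
    · rw [h, neg_sub]
      have : 0 ≤ (√(x-s))⁻¹ := by positivity
      linarith
  · exact (ab_integrable hx).add (ab_integrable2 hx)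
  · filter_upwards [hne] with s hs
    have e : ∀ ε : ℝ, ((x + ε * Complex.I) - s : ℂ) = ((x - s : ℝ) : ℂ) + ε * Complex.I := by
      intro ε; push_cast; ring
    simp only [e]
    rcases lt_or_gt_of_ne hs with h | h
    · have hp : 0 < x - s := by linarith
      have h1 := ((rt_lim_pos hp).inv₀ (by
        have := (Real.sqrt_pos.2 hp).ne'
        exact_mod_cast this)).const_mul (w s : ℂ)
      convert h1 using 2
      rw [Real.sqrt_eq_zero_of_nonpos (by linarith : s - x ≤ 0)]
      push_cast
      simp
    · have hp : x - s < 0 := by linarith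
      have h1 := ((rt_lim_neg hp).inv₀ (by
        have := (Real.sqrt_pos.2 (by linarith : 0 < -(x-s))).ne'
        have : ((√(-(x-s)) : ℝ):ℂ) ≠ 0 := by exact_mod_cast this
        simp only [ne_eq, mul_eq_zero, Complex.I_ne_zero, this, or_self, not_false_eq_true])).const_mul (w s : ℂ)
      convert h1 using 2
      rw [Real.sqrt_eq_zero_of_nonpos hp.le, neg_sub, mul_inv, Complex.inv_I]
      push_cast
      simp
      ring

/-- Difference between truncated and regularised kernels. -/
noncomputable def kap (ε y : ℝ) : ℝ := (if ε < |y| then y⁻¹ else 0) - y / (y^2 + ε^2)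

lemma kap_neg (ε y : ℝ) : kap ε (-y) = - kap ε y := by
  unfold kap
  rw [abs_neg]
  split_ifs <;> simp [neg_div] <;> ring

lemma kap_meas (ε : ℝ) : Measurable (kap ε) := by
  unfold kap
  apply Measurable.sub
  · exact Measurable.ite (measurableSet_lt measurable_const (by fun_prop)) (by fun_prop) (by fun_prop)
  · fun_prop

lemma kap_bound {ε : ℝ} (hε : 0 < ε) (y : ℝ) : |kap ε y| ≤ ε / (y^2 + ε^2) := by
  have hp : 0 < y^2 + ε^2 := by positivity
  unfold kap
  split_ifs with h
  · have hy : 0 < |y| := hε.trans h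
    have hy0 : y ≠ 0 := abs_pos.1 hy
    have : y⁻¹ - y / (y^2 + ε^2) = (ε / y) * (ε / (y^2 + ε^2)) := by
      field_simp
      ring
    rw [this, abs_mul, abs_of_pos (by positivity : 0 < ε / (y^2 + ε^2))]
    apply mul_le_of_le_one_left (by positivity)
    rw [abs_div, abs_of_pos hε, div_le_one hy]
    exact h.le
  · rw [zero_sub, abs_neg, abs_div, abs_of_pos hp]
    exact div_le_div_of_nonneg_right (not_lt.1 h) hp.le

lemma kap_bound' {ε : ℝ} (hε : 0 < ε) (y : ℝ) : ‖kap ε y‖ ≤ ε⁻¹ := by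
  refine (kap_bound hε y).trans ?_
  rw [div_le_iff₀ (by positivity)]
  field_simp
  nlinarith [sq_nonneg y]

lemma pv_diff {f : ℝ → ℝ} (hf : Integrable f) {x : ℝ} (hc : ContinuousAt f x) :
    Tendsto (fun ε => ∫ ξ, f ξ * kap ε (x - ξ)) (𝓝[>] 0) (𝓝 0) := by
  set G : ℝ → ℝ := fun y => |f (x - y) - f (x + y)| with hG
  have hf1 : Integrable (fun y => f (x - y)) := hf.comp_sub_left x
  have hf2 : Integrable (fun y => f (x + y)) := hf.comp_add_left x
  have hGi : Integrable G := (hf1.sub hf2).abs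
  have hGc : ContinuousAt G 0 := by
    have c1 : ContinuousAt (fun y => f (x - y)) 0 :=
      ContinuousAt.comp (f := fun y : ℝ => x - y) (by simpa using hc) (by fun_prop)
    have c2 : ContinuousAt (fun y => f (x + y)) 0 :=
      ContinuousAt.comp (f := fun y : ℝ => x + y) (by simpa using hc) (by fun_prop)
    exact (c1.sub c2).abs
  have hG0 : G 0 = 0 := by simp [hG]
  have hpk := tendsto_integral_comp_smul_smul_of_integrable (μ := (volume : Measure ℝ))
    (φ := fun u : ℝ => π⁻¹ * (1 + u^2)⁻¹) (fun u => by positivity)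
    (by rw [MeasureTheory.integral_const_mul, integral_univ_inv_one_add_sq]
        exact inv_mul_cancel₀ Real.pi_ne_zero) (by
      simp only [Module.finrank_self, pow_one]
      have h1 : Tendsto (fun u : ℝ => π⁻¹ * ‖u‖⁻¹) (Bornology.cobounded ℝ) (𝓝 0) := by
        have := (tendsto_inv_atTop_zero.comp (tendsto_norm_cobounded_atTop (E := ℝ))).const_mul π⁻¹
        simpa using this
      refine squeeze_zero (fun u => by positivity) (fun u => ?_) h1
      rcases eq_or_ne u 0 with rfl | hu
      · simp
      have hu' : 0 < ‖u‖ := norm_pos_iff.2 hu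
      have : u^2 = ‖u‖^2 := by simp
      rw [this]
      have hpi := Real.pi_pos
      field_simp
      nlinarith) hGi hGc
  rw [hG0] at hpk
  have hpk2 := (hpk.comp tendsto_inv_nhdsGT_zero).const_mul (π/2)
  rw [mul_zero] at hpk2
  refine squeeze_zero_norm' ?_ hpk2
  filter_upwards [self_mem_nhdsWithin] with ε hε
  have hε : 0 < ε := hε
  have i1 : Integrable (fun y => f (x - y) * kap ε y) :=
    hf1.mul_bdd (kap_meas ε).aestronglyMeasurable (Eventually.of_forall (kap_bound' hε))
  have i2 : Integrable (fun y => f (x + y) * kap ε y) :=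
    hf2.mul_bdd (kap_meas ε).aestronglyMeasurable (Eventually.of_forall (kap_bound' hε))
  have e1 : ∫ ξ, f ξ * kap ε (x - ξ) = ∫ y, f (x - y) * kap ε y := by
    rw [← integral_sub_left_eq_self (fun ξ => f ξ * kap ε (x - ξ)) volume x]
    simp
  have e2 : ∫ ξ, f ξ * kap ε (x - ξ) = - ∫ y, f (x + y) * kap ε y := by
    rw [← integral_add_left_eq_self (fun ξ => f ξ * kap ε (x - ξ)) x, ← MeasureTheory.integral_neg]
    congr 1
    ext y
    rw [show x - (x + y) = -y by ring, kap_neg]; ring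
  have e3 : ∫ ξ, f ξ * kap ε (x - ξ) = (1/2) * ∫ y, (f (x - y) - f (x + y)) * kap ε y := by
    have : ∫ y, (f (x - y) - f (x + y)) * kap ε y
        = (∫ y, f (x - y) * kap ε y) - ∫ y, f (x + y) * kap ε y := by
      rw [← MeasureTheory.integral_sub i1 i2]
      congr 1; ext y; ring
    rw [this]; linarith
  rw [e3, norm_mul, Real.norm_of_nonneg (by norm_num : (0:ℝ) ≤ 1/2)]
  have hb : ‖∫ y, (f (x - y) - f (x + y)) * kap ε y‖ ≤ ∫ y, ε / (y^2 + ε^2) * G y := by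
    apply MeasureTheory.norm_integral_le_of_norm_le
    · have hcont : Continuous (fun y : ℝ => ε / (y^2 + ε^2)) := by
        apply Continuous.div continuous_const (by fun_prop)
        intro y; positivity
      refine hGi.bdd_mul (c := ε⁻¹) hcont.aestronglyMeasurable (Eventually.of_forall fun y => ?_)
      rw [Real.norm_of_nonneg (by positivity), div_le_iff₀ (by positivity)]
      field_simp
      nlinarith [sq_nonneg y]
    · refine Eventually.of_forall fun y => ?_
      rw [norm_mul, mul_comm]
      exact mul_le_mul_of_nonneg_right (kap_bound hε y) (abs_nonneg _)
  have he : π / 2 * ∫ y, ((ε⁻¹) ^ Module.finrank ℝ ℝ * (π⁻¹ * (1 + (ε⁻¹ • y)^2)⁻¹)) • G y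
      = 1/2 * ∫ y, ε / (y^2 + ε^2) * G y := by
    rw [← MeasureTheory.integral_const_mul, ← MeasureTheory.integral_const_mul]
    congr 1
    ext y
    have hpi := Real.pi_pos
    have hne : y^2 + ε^2 ≠ 0 := by positivity
    simp only [Module.finrank_self, pow_one, smul_eq_mul]
    have : (1 + (ε⁻¹ * y)^2)⁻¹ = ε^2 / (y^2 + ε^2) := by
      rw [inv_eq_iff_eq_inv, inv_div]
      field_simp
      ring
    rw [this]
    field_simp
  simp only [Function.comp]
  rw [he]
  exact mul_le_mul_of_nonneg_left hb (by norm_num)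

lemma reg_lim {x : ℝ} (hx : x ∈ Set.Ioo (-1:ℝ) 1) :
    Tendsto (fun ε : ℝ => ∫ ξ, (k1 ξ * k2 ξ) * ((x - ξ) / ((x-ξ)^2 + ε^2))) (𝓝[>] 0)
      (𝓝 (π / 2 * (k1 x ^ 2 - k2 x ^ 2))) := by
  have h := (((phi_lim hx).pow 2).const_mul (π / 2 : ℂ))
  have h2 := (Complex.continuous_re.tendsto _).comp h
  have e : ((π / 2 : ℂ) * ((k1 x : ℂ) - Complex.I * k2 x)^2).re = π / 2 * (k1 x ^ 2 - k2 x ^ 2) := by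
    have : (π / 2 : ℂ) * ((k1 x : ℂ) - Complex.I * k2 x)^2
      = ((π / 2 * (k1 x ^ 2 - k2 x ^ 2) : ℝ) : ℂ) + ((-π * k1 x * k2 x : ℝ) : ℂ) * Complex.I := by
      push_cast
      linear_combination (π / 2 * (k2 x)^2 : ℂ) * Complex.I_sq
    rw [this]
    simp only [Complex.add_re, Complex.ofReal_re, Complex.re_ofReal_mul, Complex.I_re, mul_zero, add_zero]
  rw [e] at h2
  refine h2.congr' ?_
  filter_upwards [self_mem_nhdsWithin] with ε hε
  have hε : 0 < ε := hε
  have hz : 0 < (x + ε * Complex.I : ℂ).im := by simpa using hε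
  simp only [Function.comp]
  rw [← cauchy hz]
  have hc : Continuous (fun ξ : ℝ => ((x + ε * Complex.I : ℂ) - ξ)⁻¹) := by
    apply Continuous.inv₀ (by fun_prop)
    exact fun ξ => sub_ne_zero_of_im hz ξ
  have hi : Integrable (fun ξ : ℝ => ((k1 ξ * k2 ξ : ℝ) : ℂ) / ((x + ε * Complex.I : ℂ) - ξ)) := by
    simp only [div_eq_mul_inv]
    refine kk_integrable.ofReal.mul_bdd (c := ε⁻¹) hc.aestronglyMeasurable (Eventually.of_forall ?_)
    intro ξ
    rw [norm_inv]
    have := im_le_norm (z := x + ε * Complex.I) ξ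
    exact inv_anti₀ hε (by simpa using this)
  have hr := integral_re hi
  simp only [RCLike.re_eq_complex_re] at hr
  rw [← hr]
  congr 1
  ext ξ
  rw [div_eq_mul_inv, Complex.re_ofReal_mul, Complex.inv_re]
  congr 2
  · simp
  · simp [Complex.normSq_apply]; ring

end HT

theorem stmt_15 (x : ℝ) (hx : x ∈ Set.Ioo (-1:ℝ) 1) :
    Tendsto (fun ε : ℝ =>
        ∫ ξ in {ξ : ℝ | ξ ∈ Set.Ioo (-1:ℝ) 1 ∧ ε < |ξ - x|},
          ellipticK (Real.sqrt ((1+ξ)/2)) * ellipticK (Real.sqrt ((1-ξ)/2))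
            * (2 / (π * (x - ξ))))
      (𝓝[>] 0)
      (𝓝 ((ellipticK (Real.sqrt ((1+x)/2)))^2 - (ellipticK (Real.sqrt ((1-x)/2)))^2)) := by
  have h := ((HT.reg_lim hx).add (HT.pv_diff HT.kk_integrable (HT.kk_contAt hx))).const_mul (1/π)
  have hpi := Real.pi_ne_zero
  have h2 : √(2:ℝ)^2 = 2 := Real.sq_sqrt (by norm_num)
  have e : 1/π * (π / 2 * (HT.k1 x ^ 2 - HT.k2 x ^ 2) + 0)
      = (ellipticK (Real.sqrt ((1+x)/2)))^2 - (ellipticK (Real.sqrt ((1-x)/2)))^2 := by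
    rw [HT.ellK1 hx, HT.ellK2 hx, mul_pow, mul_pow, h2]
    field_simp
    ring
  rw [e] at h
  refine h.congr' ?_
  filter_upwards [self_mem_nhdsWithin] with ε hε
  have hε : 0 < ε := hε
  have i1 : Integrable (fun ξ => (HT.k1 ξ * HT.k2 ξ) * ((x - ξ) / ((x-ξ)^2 + ε^2))) := by
    have hcont : Continuous (fun ξ : ℝ => (x - ξ) / ((x-ξ)^2 + ε^2)) := by
      apply Continuous.div (by fun_prop) (by fun_prop)
      intro y; positivity
    refine HT.kk_integrable.mul_bdd (c := ε⁻¹) hcont.aestronglyMeasurable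
      (Eventually.of_forall fun ξ => ?_)
    have hp : 0 < (x-ξ)^2 + ε^2 := by positivity
    rw [norm_div, Real.norm_of_nonneg hp.le, Real.norm_eq_abs, div_le_iff₀ hp]
    rw [← sq_abs (x-ξ)]
    field_simp
    nlinarith [sq_nonneg (|x-ξ| - ε), sq_nonneg (|x-ξ|), abs_nonneg (x-ξ)]
  have i2 : Integrable (fun ξ => (HT.k1 ξ * HT.k2 ξ) * HT.kap ε (x - ξ)) :=
    HT.kk_integrable.mul_bdd ((HT.kap_meas ε).comp (measurable_const.sub measurable_id)).aestronglyMeasurable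
      (Eventually.of_forall fun ξ => HT.kap_bound' hε _)
  rw [← MeasureTheory.integral_add i1 i2, ← MeasureTheory.integral_const_mul]
  have hm : MeasurableSet {ξ : ℝ | ξ ∈ Set.Ioo (-1:ℝ) 1 ∧ ε < |ξ - x|} :=
    measurableSet_Ioo.inter (measurableSet_lt measurable_const
      (show Measurable (fun ξ : ℝ => |ξ - x|) by fun_prop))
  rw [← MeasureTheory.integral_indicator hm]
  congr 1
  ext ξ
  unfold HT.kap
  by_cases hξ : ξ ∈ Set.Ioo (-1:ℝ) 1
  · by_cases hd : ε < |ξ - x|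
    · rw [Set.indicator_of_mem (show ξ ∈ {ξ : ℝ | ξ ∈ Set.Ioo (-1:ℝ) 1 ∧ ε < |ξ - x|} from ⟨hξ, hd⟩),
        if_pos (by rwa [abs_sub_comm]), HT.ellK1 hξ, HT.ellK2 hξ]
      have hne : x - ξ ≠ 0 := by
        intro h0
        have : ξ - x = 0 := by linarith
        rw [this, abs_zero] at hd
        linarith
      rw [show ∀ a b c d : ℝ, 1/π * (√2 * a * (√2 * b) * c + √2 * a * (√2 * b) * (d - c))
        = √2^2 * (1/π) * a * b * d by intros; ring, h2]
      field_simp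
    · rw [Set.indicator_of_notMem (fun h => hd h.2), if_neg (by rwa [abs_sub_comm])]
      ring
  · rw [Set.indicator_of_notMem (fun h => hξ h.1), HT.kk_zero hξ]
    ring
end
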